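/- arXiv:1911.05545 — 7 statements merged into one kernel-verified Lean document; each statement's English description precedes it below -/
import Mathlib

section
/- Let G be a finite simple graph, let c ≥ 1 be real and d ≥ 1 an integer, and let H be a subgraph of G such that: (1) every vertex has degree at most d in H; (2) every edge e of G not in H has an endpoint v with degree at least d/c in H. Then μ(H) ≥ μ(G) / (2c(1 + 1/d)). -/
/-!
Let `P` be a maximum matching of `G`. Give each edge of `H` outside `P` the weight `1/d`, and give
an edge `uv` of `H` inside `P` the weight left free by its neighbours,
`max 0 (1 - (deg u + deg v) / d)`, where degrees count edges of `H` outside `P`. This is a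
fractional matching of `H`. Every edge of `P` has weighted degrees at its two ends summing to at
least `1/c`: if it is missing from `H`, by the kernel property, and otherwise because they sum to
at least one. As the edges of `P` are disjoint, the total weight is at least `μ(G) / (2c)`.

It remains to round this fractional matching to an integral one, losing only a factor `1 + 1/d`
(`exists_matching_weight_le`). Instead of edge-colouring `H` by Vizing's theorem, the proof uses
the idea behind the Gallai–Edmonds decomposition. A vertex covered by all maximum matchings can be
deleted: this lowers the matching number by one and the weight by at most one. If no such vertex
exists, the relation that no maximum matching misses both vertices is an equivalence relation
(`gallai_trans`) that contains adjacency, so a maximum matching misses at most one vertex of each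
class. A class of at most `2k + 1` vertices with `k` matching edges carries weight at most
`(1 + 1/d) k` (`weight_le_of_card_le`): an edge heavier than `1/d` can be removed together with its
ends at the cost of weight at most one, and if all edges weigh at most `1/d`, the bound follows
from the degree sum when `d ≤ 2k` and from the number of edges when `d > 2k`.
-/

open Finset

/-- A matching in a graph `G`, given as a finite set of edges of `G` that are
pairwise vertex-disjoint. -/
def IsMatchingSet {V : Type*} (G : SimpleGraph V) (M : Finset (Sym2 V)) : Prop :=
  (∀ e ∈ M, e ∈ G.edgeSet) ∧
  ∀ e ∈ M, ∀ f ∈ M, e ≠ f → ∀ v : V, v ∈ e → v ∉ f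

/-- The matching number `μ(G)`: the maximum cardinality of a matching in `G`. -/
noncomputable def matchNum {V : Type*} (G : SimpleGraph V) : ℕ :=
  sSup {k | ∃ M : Finset (Sym2 V), IsMatchingSet G M ∧ M.card = k}

/-- `M` is a matching contained in the edge set `E`. -/
def IsMatchIn {V : Type*} (E M : Finset (Sym2 V)) : Prop :=
  M ⊆ E ∧ ∀ e ∈ M, ∀ f ∈ M, e ≠ f → ∀ v : V, v ∈ e → v ∉ f

/-- `M` is a matching of maximum cardinality in the edge set `E`. -/
def IsMaxMatchIn {V : Type*} (E M : Finset (Sym2 V)) : Prop :=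
  IsMatchIn E M ∧ ∀ N, IsMatchIn E N → N.card ≤ M.card

/-- The set of vertices covered by the edges in `M`. -/
def cov {V : Type*} [DecidableEq V] (M : Finset (Sym2 V)) : Finset V :=
  M.biUnion Sym2.toFinset

lemma mem_cov {V : Type*} [DecidableEq V] {M : Finset (Sym2 V)} {v : V} :
    v ∈ cov M ↔ ∃ e ∈ M, v ∈ e := by
  simp [cov]

lemma card_cov_le {V : Type*} [DecidableEq V] (M : Finset (Sym2 V)) :
    (cov M).card ≤ 2 * M.card := by
  rw [mul_comm]
  refine Finset.card_biUnion_le_card_mul _ _ _ fun e _ => ?_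
  rw [Sym2.card_toFinset]
  split_ifs <;> omega

lemma IsMatchIn.card_cov {V : Type*} [DecidableEq V] {E M : Finset (Sym2 V)}
    (hE : ∀ e ∈ E, ¬ e.IsDiag) (hM : IsMatchIn E M) : (cov M).card = 2 * M.card := by
  unfold cov
  rw [Finset.card_biUnion, Finset.sum_congr rfl
    (fun e he => Sym2.card_toFinset_of_not_isDiag e (hE e (hM.1 he)))]
  · simp [mul_comm]
  · intro e he f hf hne
    refine Finset.disjoint_left.2 ?_
    intro v hv hv'
    exact hM.2 e he f hf hne v (Sym2.mem_toFinset.1 hv) (Sym2.mem_toFinset.1 hv')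

lemma exists_isMaxMatchIn {V : Type*} [DecidableEq V] (E : Finset (Sym2 V)) :
    ∃ M, IsMaxMatchIn E M := by
  classical
  obtain ⟨M, hM, hmax⟩ := Finset.exists_max_image
    (E.powerset.filter fun M => IsMatchIn E M) Finset.card
    ⟨∅, Finset.mem_filter.2 (by simp [IsMatchIn])⟩
  refine ⟨M, (Finset.mem_filter.1 hM).2, fun N hN => hmax N ?_⟩
  exact Finset.mem_filter.2 ⟨Finset.mem_powerset.2 hN.1, hN⟩

lemma IsMatchIn.insert_edge {V : Type*} [DecidableEq V] {E M : Finset (Sym2 V)}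
    (hM : IsMatchIn E M) {e : Sym2 V} (he : e ∈ E) (hdis : ∀ v ∈ e, v ∉ cov M) :
    IsMatchIn E (insert e M) := by
  refine ⟨Finset.insert_subset he hM.1, ?_⟩
  intro a ha b hb hab v hva hvb
  rw [Finset.mem_insert] at ha hb
  rcases ha with rfl | ha <;> rcases hb with rfl | hb
  · exact hab rfl
  · exact hdis v hva (mem_cov.2 ⟨b, hb, hvb⟩)
  · exact hdis v hvb (mem_cov.2 ⟨a, ha, hva⟩)
  · exact hM.2 a ha b hb hab v hva hvb

lemma IsMatchIn.erase_edge {V : Type*} [DecidableEq V] {E M : Finset (Sym2 V)}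
    (hM : IsMatchIn E M) (f : Sym2 V) : IsMatchIn E (M.erase f) :=
  ⟨(Finset.erase_subset _ _).trans hM.1, fun a ha b hb =>
    hM.2 a (Finset.mem_of_mem_erase ha) b (Finset.mem_of_mem_erase hb)⟩

/-- A maximum matching cannot miss both ends of an edge. -/
lemma IsMaxMatchIn.exists_mem_cov {V : Type*} [DecidableEq V] {E M : Finset (Sym2 V)}
    (hM : IsMaxMatchIn E M) {e : Sym2 V} (he : e ∈ E) : ∃ v ∈ e, v ∈ cov M := by
  by_contra! hcon
  have h := hM.2 _ (hM.1.insert_edge he hcon)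
  rw [Finset.card_insert_of_notMem] at h
  · omega
  · intro heM
    induction e with
    | _ x y => exact hcon x (by simp) (mem_cov.2 ⟨_, heM, by simp⟩)

/-- The core of Gallai's lemma: if `t` is missed by some maximum matching, and no maximum matching
misses `u, t` or `t, w` simultaneously, then no maximum matching misses both `u` and `w`. -/
lemma gallai_trans {V : Type*} [DecidableEq V] {E : Finset (Sym2 V)}
    (hE : ∀ e ∈ E, ¬ e.IsDiag) {u t w : V} (huw : u ≠ w)
    (ht : ∃ N, IsMaxMatchIn E N ∧ t ∉ cov N)
    (hut : ∀ N, IsMaxMatchIn E N → u ∈ cov N ∨ t ∈ cov N)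
    (htw : ∀ N, IsMaxMatchIn E N → t ∈ cov N ∨ w ∈ cov N)
    {M : Finset (Sym2 V)} (hM : IsMaxMatchIn E M) : u ∈ cov M ∨ w ∈ cov M := by
  classical
  by_contra! hcon
  obtain ⟨huM, hwM⟩ := hcon
  -- Among the maximum matchings missing `t`, take the one sharing most edges with `M`.
  obtain ⟨N, hN, hmax⟩ := Finset.exists_max_image
    (E.powerset.filter fun N => IsMaxMatchIn E N ∧ t ∉ cov N) (fun N => (M ∩ N).card)
    (by
      obtain ⟨N, hN, htN⟩ := ht
      exact ⟨N, Finset.mem_filter.2 ⟨Finset.mem_powerset.2 hN.1.1, hN, htN⟩⟩)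
  obtain ⟨-, hNm, htN⟩ := Finset.mem_filter.1 hN
  have huN : u ∈ cov N := (hut N hNm).resolve_right htN
  have hwN : w ∈ cov N := (htw N hNm).resolve_left htN
  have hcard : M.card = N.card := le_antisymm (hNm.2 _ hM.1) (hM.2 _ hNm.1)
  have hcov : (cov M).card = (cov N).card := by
    rw [hM.1.card_cov hE, hNm.1.card_cov hE, hcard]
  have h1 : 1 < (cov M \ cov N).card := by
    rw [Finset.card_sdiff_comm hcov, Finset.one_lt_card]
    exact ⟨u, by simp [huN, huM], w, by simp [hwN, hwM], huw⟩
  obtain ⟨x, hx, hxt⟩ := Finset.exists_mem_ne h1 t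
  rw [Finset.mem_sdiff] at hx
  obtain ⟨hxM, hxN⟩ := hx
  obtain ⟨e, heM, hxe⟩ := mem_cov.1 hxM
  obtain ⟨y, rfl⟩ := Sym2.mem_iff_exists.1 hxe
  have heE := hM.1.1 heM
  have hyN : y ∈ cov N := by
    obtain ⟨v, hv, hvN⟩ := hNm.exists_mem_cov heE
    rcases Sym2.mem_iff.1 hv with rfl | rfl
    · exact absurd hvN hxN
    · exact hvN
  obtain ⟨f, hfN, hyf⟩ := mem_cov.1 hyN
  have heN : s(x, y) ∉ N := fun h => hxN (mem_cov.2 ⟨_, h, by simp⟩)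
  have hfM : f ∉ M := by
    intro h
    have hne : s(x, y) ≠ f := by rintro rfl; exact heN hfN
    exact hM.1.2 _ heM f h hne y (by simp) hyf
  -- Exchange the edge `f` of `N` at `y` for the edge `xy` of `M`.
  have hN' : IsMatchIn E (insert s(x, y) (N.erase f)) := by
    refine (hNm.1.erase_edge f).insert_edge heE ?_
    intro v hv hvc
    obtain ⟨g, hg, hvg⟩ := mem_cov.1 hvc
    rw [Finset.mem_erase] at hg
    rcases Sym2.mem_iff.1 hv with rfl | rfl
    · exact hxN (mem_cov.2 ⟨g, hg.2, hvg⟩)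
    · exact hNm.1.2 g hg.2 f hfN hg.1 v hvg hyf
  have hN'card : (insert s(x, y) (N.erase f)).card = N.card := by
    rw [Finset.card_insert_of_notMem (fun h => heN (Finset.mem_of_mem_erase h)),
      Finset.card_erase_of_mem hfN]
    have := Finset.card_pos.2 ⟨f, hfN⟩
    omega
  have htN' : t ∉ cov (insert s(x, y) (N.erase f)) := by
    intro h
    obtain ⟨g, hg, htg⟩ := mem_cov.1 h
    rcases Finset.mem_insert.1 hg with rfl | hg
    · rcases Sym2.mem_iff.1 htg with rfl | rfl
      · exact hxt rfl
      · exact htN hyN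
    · exact htN (mem_cov.2 ⟨g, Finset.mem_of_mem_erase hg, htg⟩)
  have hle := hmax (insert s(x, y) (N.erase f)) (Finset.mem_filter.2
    ⟨Finset.mem_powerset.2 hN'.1, ⟨hN', fun K hK => hN'card ▸ hNm.2 K hK⟩, htN'⟩)
  have hsub : insert s(x, y) (M ∩ N) ⊆ M ∩ insert s(x, y) (N.erase f) := by
    intro g hg
    rcases Finset.mem_insert.1 hg with rfl | hg
    · simp [heM]
    · rw [Finset.mem_inter] at hg
      have : g ≠ f := by rintro rfl; exact hfM hg.1
      simp [hg.1, hg.2, this]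
  have := Finset.card_le_card hsub
  rw [Finset.card_insert_of_notMem (by simp [heN])] at this
  omega

/-- Twice the total weight of a loopless edge set is the sum of the weighted degrees. -/
lemma sum_weighted_degree {V : Type*} [DecidableEq V] (C : Finset V)
    (E : Finset (Sym2 V)) (hE : ∀ e ∈ E, ¬ e.IsDiag) (hC : ∀ e ∈ E, ∀ v ∈ e, v ∈ C)
    (w : Sym2 V → ℝ) :
    ∑ v ∈ C, ∑ e ∈ E with v ∈ e, w e = 2 * ∑ e ∈ E, w e := by
  simp_rw [Finset.sum_filter]
  rw [Finset.sum_comm, Finset.mul_sum]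
  refine Finset.sum_congr rfl fun e he => ?_
  rw [← Finset.sum_filter, Finset.sum_const]
  have : C.filter (fun v => v ∈ e) = e.toFinset := by
    ext v
    simp only [Finset.mem_filter, Sym2.mem_toFinset]
    exact ⟨fun h => h.2, fun h => ⟨hC e he v h, h⟩⟩
  rw [this, Sym2.card_toFinset_of_not_isDiag e (hE e he)]
  simp

/-- A weighting with weighted degrees at most one in which every edge is light (weight at most
`1/d`) or dominating (all edges meeting it weigh at most one together) has total weight at
most `(1 + 1/d) k` on `2k + 1` vertices. -/
lemma weight_le_of_card_le {V : Type*} [DecidableEq V] (d : ℕ) (hd : 1 ≤ d)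
    (w : Sym2 V → ℝ) (hw : ∀ e, 0 ≤ w e) (k : ℕ) :
    ∀ (C : Finset V) (E : Finset (Sym2 V)), (∀ e ∈ E, ¬ e.IsDiag) →
      (∀ e ∈ E, ∀ v ∈ e, v ∈ C) → C.card ≤ 2 * k + 1 →
      (∀ v, ∑ e ∈ E with v ∈ e, w e ≤ 1) →
      (∀ e ∈ E, w e ≤ 1 / d ∨ ∑ f ∈ E with ∃ v ∈ e.toFinset, v ∈ f, w f ≤ 1) →
      ∑ e ∈ E, w e ≤ (1 + 1 / d) * k := by
  have hd0 : (0 : ℝ) < d := by exact_mod_cast hd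
  induction k with
  | zero =>
    intro C E hE hC hcard _ _
    have : E = ∅ := by
      refine Finset.eq_empty_of_forall_notMem fun e he => ?_
      have h1 : e.toFinset ⊆ C := fun v hv => hC e he v (Sym2.mem_toFinset.1 hv)
      have h2 := Finset.card_le_card h1
      rw [Sym2.card_toFinset_of_not_isDiag e (hE e he)] at h2
      omega
    simp [this]
  | succ k ih =>
    intro C E hE hC hcard hv he
    by_cases hheavy : ∃ e ∈ E, ¬ w e ≤ 1 / d
    · -- Deleting both ends of a heavy edge removes two vertices and weight at most one.
      obtain ⟨e, heE, hlt⟩ := hheavy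
      have h1 := (he e heE).resolve_left hlt
      have h2 : e.toFinset ⊆ C := fun v hv => hC e heE v (Sym2.mem_toFinset.1 hv)
      have h3 := Finset.card_sdiff_of_subset h2
      rw [Sym2.card_toFinset_of_not_isDiag e (hE e heE)] at h3
      have hsub : E.filter (fun f => ¬ ∃ v ∈ e.toFinset, v ∈ f) ⊆ E := Finset.filter_subset _ _
      have := ih (C \ e.toFinset) (E.filter fun f => ¬ ∃ v ∈ e.toFinset, v ∈ f)
        (fun f hf => hE f (hsub hf))
        (by
          intro f hf v hvf
          rw [Finset.mem_filter] at hf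
          rw [Finset.mem_sdiff, Sym2.mem_toFinset]
          exact ⟨hC f hf.1 v hvf, fun hve => hf.2 ⟨v, Sym2.mem_toFinset.2 hve, hvf⟩⟩)
        (by omega)
        (fun v => (Finset.sum_le_sum_of_subset_of_nonneg
          (Finset.filter_subset_filter _ hsub) (fun f _ _ => hw f)).trans (hv v))
        (fun f hf => (he f (hsub hf)).imp_right fun h =>
          (Finset.sum_le_sum_of_subset_of_nonneg
            (Finset.filter_subset_filter _ hsub) (fun f _ _ => hw f)).trans h)
      rw [← Finset.sum_filter_add_sum_filter_not E (fun f => ∃ v ∈ e.toFinset, v ∈ f)]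
      have hpos : 0 ≤ 1 / (d : ℝ) := by positivity
      push_cast
      linarith
    · push Not at hheavy
      -- If `d ≤ 2(k + 1)`, half the sum of the degrees suffices; otherwise count the edges.
      by_cases hdk : d ≤ 2 * (k + 1)
      · have h1 := sum_weighted_degree C E hE hC w
        have h2 : ∑ v ∈ C, ∑ e ∈ E with v ∈ e, w e ≤ C.card := by
          refine (Finset.sum_le_sum fun v _ => hv v).trans ?_
          simp
        have h3 : (C.card : ℝ) ≤ 2 * (k + 1 : ℕ) + 1 := by exact_mod_cast hcard
        have h4 : (d : ℝ) ≤ 2 * (k + 1 : ℕ) := by exact_mod_cast hdk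
        have h5 : 1 / 2 ≤ 1 / (d : ℝ) * (k + 1 : ℕ) := by
          rw [one_div_mul_eq_div, le_div_iff₀ hd0]; linarith
        linarith
      · have h1 : E.card ≤ C.card.choose 2 := by
          rw [← Finset.card_powersetCard]
          refine Finset.card_le_card_of_injOn Sym2.toFinset ?_ ?_
          · intro e heE
            rw [Finset.mem_coe, Finset.mem_powersetCard]
            exact ⟨fun v hv => hC e heE v (Sym2.mem_toFinset.1 hv),
              Sym2.card_toFinset_of_not_isDiag e (hE e heE)⟩
          · intro e _ f _ hef
            refine Sym2.ext fun v => ?_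
            rw [← Sym2.mem_toFinset, ← Sym2.mem_toFinset, hef]
        have h2 : C.card.choose 2 ≤ (k + 1) * (d + 1) := by
          refine (Nat.choose_le_choose 2 hcard).trans ?_
          rw [Nat.choose_two_right, show (2 * (k + 1) + 1) * (2 * (k + 1) + 1 - 1)
            = 2 * ((2 * (k + 1) + 1) * (k + 1)) by simp; ring,
            Nat.mul_div_cancel_left _ (by norm_num)]
          nlinarith
        have h3 : ∑ e ∈ E, w e ≤ E.card * (1 / d : ℝ) := by
          refine (Finset.sum_le_sum fun e heE => hheavy e heE).trans ?_
          simp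
        have h4 : (E.card : ℝ) ≤ (k + 1 : ℕ) * (d + 1) := by exact_mod_cast h1.trans h2
        calc ∑ e ∈ E, w e ≤ E.card * (1 / d : ℝ) := h3
          _ ≤ ((k + 1 : ℕ) * (d + 1)) * (1 / d : ℝ) := by gcongr
          _ = (1 + 1 / d) * (k + 1 : ℕ) := by field_simp

/-- Fractional matchings as in `weight_le_of_card_le` can be rounded with loss `1 + 1/d`.
By induction on the number of edges: a vertex lying in every maximum matching may be deleted;
if there is none, `gallai_trans` splits the graph into blocks in each of which a maximum matching
misses at most one vertex. -/
lemma exists_matching_weight_le {V : Type*} [Fintype V] [DecidableEq V] (d : ℕ) (hd : 1 ≤ d)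
    (w : Sym2 V → ℝ) (hw : ∀ e, 0 ≤ w e) (E : Finset (Sym2 V)) (hE : ∀ e ∈ E, ¬ e.IsDiag)
    (hv : ∀ v, ∑ e ∈ E with v ∈ e, w e ≤ 1)
    (he : ∀ e ∈ E, w e ≤ 1 / d ∨ ∑ f ∈ E with ∃ v ∈ e.toFinset, v ∈ f, w f ≤ 1) :
    ∃ M, IsMatchIn E M ∧ ∑ e ∈ E, w e ≤ (1 + 1 / d) * M.card := by
  classical
  induction hn : E.card using Nat.strong_induction_on generalizing E with
  | _ n ih =>
  obtain ⟨M, hM⟩ := exists_isMaxMatchIn E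
  refine ⟨M, hM.1, ?_⟩
  have hpos : 0 ≤ 1 / (d : ℝ) := by positivity
  by_cases hess : ∃ v, ∀ N, IsMaxMatchIn E N → v ∈ cov N
  · obtain ⟨v, hvN⟩ := hess
    have hsub : E.filter (fun f => ¬ v ∈ f) ⊆ E := Finset.filter_subset _ _
    have hlt : (E.filter (fun f => ¬ v ∈ f)).card < n := by
      obtain ⟨e, heM, hve⟩ := mem_cov.1 (hvN M hM)
      rw [← hn]
      refine Finset.card_lt_card (Finset.ssubset_iff_subset_ne.2 ⟨hsub, fun h => ?_⟩)
      have := hM.1.1 heM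
      rw [← h, Finset.mem_filter] at this
      exact this.2 hve
    obtain ⟨N, hN, hNw⟩ := ih _ hlt _ (fun f hf => hE f (hsub hf))
      (fun v => (Finset.sum_le_sum_of_subset_of_nonneg
          (Finset.filter_subset_filter _ hsub) (fun f _ _ => hw f)).trans (hv v))
      (fun f hf => (he f (hsub hf)).imp_right fun h =>
          (Finset.sum_le_sum_of_subset_of_nonneg
            (Finset.filter_subset_filter _ hsub) (fun f _ _ => hw f)).trans h) rfl
    have hNE : IsMatchIn E N := ⟨hN.1.trans hsub, hN.2⟩
    have hcard : N.card + 1 ≤ M.card := by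
      by_contra hcon
      -- `N` would be a maximum matching avoiding `v`.
      have hmax : IsMaxMatchIn E N := ⟨hNE, fun K hK => by have := hM.2 K hK; omega⟩
      obtain ⟨e, heN, hve⟩ := mem_cov.1 (hvN N hmax)
      exact (Finset.mem_filter.1 (hN.1 heN)).2 hve
    have hcard' : (N.card : ℝ) + 1 ≤ M.card := by exact_mod_cast hcard
    rw [← Finset.sum_filter_add_sum_filter_not E (fun f => v ∈ f)]
    have := hv v
    have : (1 + 1 / (d : ℝ)) * (N.card + 1) ≤ (1 + 1 / d) * M.card := by gcongr
    linarith
  · push Not at hess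
    -- `u ∼ v` iff no maximum matching misses both; adjacent vertices are equivalent.
    let S : Setoid V :=
      { r := fun u v => u = v ∨ ∀ N, IsMaxMatchIn E N → u ∈ cov N ∨ v ∈ cov N
        iseqv :=
          { refl := fun u => Or.inl rfl
            symm := fun h => h.imp Eq.symm fun h N hN => (h N hN).symm
            trans := by
              intro u t x h1 h2
              rcases h1 with rfl | h1
              · exact h2
              rcases h2 with rfl | h2
              · exact Or.inr h1
              by_cases hux : u = x
              · exact Or.inl hux
              · exact Or.inr fun N hN => gallai_trans hE hux (hess t) h1 h2 hN } }
    let cls : V → Quotient S := fun v => Quotient.mk S v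
    let g : Sym2 V → Quotient S := fun e => cls e.out.1
    have hadj : ∀ e ∈ E, ∀ x ∈ e, cls x = g e := by
      intro e heE x hx
      refine Quotient.sound ?_
      by_cases hxe : x = e.out.1
      · exact Or.inl hxe
      · refine Or.inr fun N hN => ?_
        have heq : e = s(x, e.out.1) := ((Sym2.mem_and_mem_iff hxe).1 ⟨hx, Sym2.out_fst_mem e⟩)
        obtain ⟨v, hv, hvN⟩ := hN.exists_mem_cov heE
        rw [heq] at hv
        rcases Sym2.mem_iff.1 hv with h | h
        · exact Or.inl (h ▸ hvN)
        · exact Or.inr (h ▸ hvN)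
    have hblock : ∀ q : Quotient S,
        ∑ e ∈ E with g e = q, w e ≤ (1 + 1 / d) * (M.filter fun e => g e = q).card := by
      intro q
      have hsub : E.filter (fun e => g e = q) ⊆ E := Finset.filter_subset _ _
      refine weight_le_of_card_le d hd w hw _ (Finset.univ.filter fun v => cls v = q) _
        (fun f hf => hE f (hsub hf)) ?_ ?_
        (fun v => (Finset.sum_le_sum_of_subset_of_nonneg
          (Finset.filter_subset_filter _ hsub) (fun f _ _ => hw f)).trans (hv v))
        (fun f hf => (he f (hsub hf)).imp_right fun h =>
          (Finset.sum_le_sum_of_subset_of_nonneg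
            (Finset.filter_subset_filter _ hsub) (fun f _ _ => hw f)).trans h)
      · intro e heq v hve
        rw [Finset.mem_filter] at heq
        simp [hadj e heq.1 v hve, heq.2]
      · have h1 := card_cov_le (M.filter fun e => g e = q)
        have h2 : ((Finset.univ.filter fun v => cls v = q) \
            cov (M.filter fun e => g e = q)).card ≤ 1 := by
          rw [Finset.card_le_one]
          intro a ha b hb
          have key : ∀ a ∈ (Finset.univ.filter fun v => cls v = q) \
              cov (M.filter fun e => g e = q), cls a = q ∧ a ∉ cov M := by
            intro a ha
            rw [Finset.mem_sdiff, Finset.mem_filter] at ha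
            refine ⟨ha.1.2, fun h => ha.2 ?_⟩
            obtain ⟨e, heM, hae⟩ := mem_cov.1 h
            refine mem_cov.2 ⟨e, Finset.mem_filter.2 ⟨heM, ?_⟩, hae⟩
            rw [← hadj e (hM.1.1 heM) a hae, ha.1.2]
          obtain ⟨ha1, ha2⟩ := key a ha
          obtain ⟨hb1, hb2⟩ := key b hb
          have hab : S.r a b := Quotient.exact (ha1.trans hb1.symm)
          rcases hab with h | h
          · exact h
          · rcases h M hM with h | h
            · exact absurd h ha2
            · exact absurd h hb2
        have h3 := Finset.card_le_card_sdiff_add_card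
          (s := Finset.univ.filter fun v => cls v = q) (t := cov (M.filter fun e => g e = q))
        omega
    have hMcard : (M.card : ℝ) = ∑ q : Quotient S, ((M.filter fun e => g e = q).card : ℝ) := by
      rw [Finset.card_eq_sum_card_fiberwise (f := g) (t := Finset.univ) (by simp)]
      push_cast
      rfl
    rw [← Finset.sum_fiberwise E g w, hMcard, Finset.mul_sum]
    exact Finset.sum_le_sum fun q _ => hblock q

lemma bddAbove_matchings {V : Type*} [Fintype V] (G : SimpleGraph V) :
    BddAbove {k | ∃ M : Finset (Sym2 V), IsMatchingSet G M ∧ M.card = k} := by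
  classical
  refine ⟨Fintype.card (Sym2 V), ?_⟩
  rintro k ⟨M, -, rfl⟩
  exact Finset.card_le_univ M

lemma exists_card_eq_matchNum {V : Type*} [Fintype V] (G : SimpleGraph V) :
    ∃ M : Finset (Sym2 V), IsMatchingSet G M ∧ M.card = matchNum G :=
  Nat.sSup_mem (s := {k | ∃ M : Finset (Sym2 V), IsMatchingSet G M ∧ M.card = k})
    ⟨0, ∅, by simp [IsMatchingSet], rfl⟩ (bddAbove_matchings G)

/-- Deterministic kernel lemma (deterministic case of Lemma 4.3): if `H ≤ G` has
maximum degree at most `d`, and every edge of `G` missing from `H` has an endpoint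
of `H`-degree at least `d/c`, then `μ(H) ≥ μ(G)/(2c(1+1/d))`. -/
theorem deterministic_kernel_approx {V : Type*} [Fintype V] [DecidableEq V]
    (G H : SimpleGraph V) [DecidableRel H.Adj] (hHG : H ≤ G)
    (c : ℝ) (hc : 1 ≤ c) (d : ℕ) (hd : 1 ≤ d)
    (hdeg : ∀ v, H.degree v ≤ d)
    (hker : ∀ u v : V, G.Adj u v → ¬H.Adj u v →
      (d : ℝ) / c ≤ ((max (H.degree u) (H.degree v) : ℕ) : ℝ)) :
    (matchNum G : ℝ) ≤ 2 * c * (1 + 1 / (d : ℝ)) * (matchNum H : ℝ) := by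
  obtain ⟨P, ⟨hPG, hPdis⟩, hPcard⟩ := exists_card_eq_matchNum G
  have hd0 : (0 : ℝ) < d := by exact_mod_cast hd
  have hc0 : (0 : ℝ) < c := by linarith
  set E := H.edgeFinset with hEdef
  have hE : ∀ e ∈ E, ¬ e.IsDiag := fun e he =>
    H.not_isDiag_of_mem_edgeSet (SimpleGraph.mem_edgeFinset.1 he)
  -- `F v` is the number of edges of `H` outside `P` at `v`.
  let F : V → ℝ := fun v => ((E.filter fun e => v ∈ e).filter fun e => e ∉ P).card
  have hdegE : ∀ v, (E.filter fun e => v ∈ e).card = H.degree v := by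
    intro v
    rw [← SimpleGraph.card_incidenceFinset_eq_degree, SimpleGraph.incidenceFinset_eq_filter]
  have hF0 : ∀ v, 0 ≤ F v := fun v => Nat.cast_nonneg _
  have hFd : ∀ v, F v ≤ d := by
    intro v
    have := (Finset.card_filter_le (E.filter fun e => v ∈ e) (fun e => e ∉ P)).trans
      ((hdegE v).le.trans (hdeg v))
    exact Nat.cast_le.2 this
  -- Edges of `P` receive whatever weight the edges outside `P`, of weight `1/d`, leave free.
  let w : Sym2 V → ℝ := fun e =>
    if e ∈ P then max 0 (1 - (∑ v ∈ e.toFinset, F v) / d) else 1 / d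
  have hw : ∀ e, 0 ≤ w e := by
    intro e
    simp only [w]
    split_ifs
    · exact le_max_left _ _
    · positivity
  have hwP : ∀ e ∈ P, w e = max 0 (1 - (∑ v ∈ e.toFinset, F v) / d) := fun e he => if_pos he
  have hwn : ∀ (A : Finset (Sym2 V)),
      ∑ e ∈ A.filter (fun e => e ∉ P), w e = (A.filter fun e => e ∉ P).card / d := by
    intro A
    rw [Finset.sum_congr rfl (fun e he => if_neg (Finset.mem_filter.1 he).2), Finset.sum_const]
    simp [div_eq_mul_inv]
  have hsplit : ∀ v, ∑ e ∈ E with v ∈ e, w e =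
      ∑ e ∈ (E.filter fun e => v ∈ e).filter (fun e => e ∈ P), w e + F v / d := by
    intro v
    rw [← Finset.sum_filter_add_sum_filter_not (E.filter fun e => v ∈ e) (fun e => e ∈ P), hwn]
  -- At a vertex of `e ∈ P`, the edge `e` is the only edge of `P`.
  have huniq : ∀ e ∈ P, ∀ f ∈ P, ∀ v ∈ e, v ∈ f → f = e := by
    intro e he f hf v hve hvf
    by_contra hne
    exact hPdis f hf e he hne v hvf hve
  have hmem : ∀ e ∈ P, e ∈ E → ∀ v ∈ e, ∑ e ∈ E with v ∈ e, w e = w e + F v / d := by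
    intro e he heE v hve
    rw [hsplit, show (E.filter fun e => v ∈ e).filter (fun e => e ∈ P) = {e} from ?_,
      Finset.sum_singleton]
    ext f
    simp only [Finset.mem_filter, Finset.mem_singleton]
    constructor
    · rintro ⟨⟨_, hvf⟩, hf⟩
      exact huniq e he f hf v hve hvf
    · rintro rfl
      exact ⟨⟨heE, hve⟩, he⟩
  have hv : ∀ v, ∑ e ∈ E with v ∈ e, w e ≤ 1 := by
    intro v
    have hFv : F v / d ≤ 1 := (div_le_one hd0).2 (hFd v)
    by_cases hex : ∃ e ∈ P, e ∈ E ∧ v ∈ e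
    · obtain ⟨e, he, heE, hve⟩ := hex
      rw [hmem e he heE v hve, hwP e he]
      have h1 : F v ≤ ∑ v ∈ e.toFinset, F v :=
        Finset.single_le_sum (fun v _ => hF0 v) (Sym2.mem_toFinset.2 hve)
      have h2 : F v / d ≤ (∑ v ∈ e.toFinset, F v) / d := by gcongr
      have h3 : max 0 (1 - (∑ v ∈ e.toFinset, F v) / d) ≤ 1 - F v / d :=
        max_le (by linarith) (by linarith)
      linarith
    · rw [hsplit, Finset.sum_eq_zero, zero_add]
      · exact hFv
      · intro e he
        simp only [Finset.mem_filter] at he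
        exact absurd ⟨e, he.2, he.1.1, he.1.2⟩ hex
  have he : ∀ e ∈ E, w e ≤ 1 / d ∨ ∑ f ∈ E with ∃ v ∈ e.toFinset, v ∈ f, w f ≤ 1 := by
    intro e heE
    by_cases heP : e ∈ P
    · rcases le_total (1 - (∑ v ∈ e.toFinset, F v) / (d : ℝ)) 0 with h | h
      · left
        rw [hwP e heP, max_eq_left h]
        positivity
      · right
        rw [← Finset.sum_filter_add_sum_filter_not (E.filter _) (fun e => e ∈ P), hwn]
        have h1 : ∑ f ∈ (E.filter fun f => ∃ v ∈ e.toFinset, v ∈ f).filter (fun f => f ∈ P), w f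
            ≤ ∑ f ∈ {e}, w f := by
          refine Finset.sum_le_sum_of_subset_of_nonneg ?_ (fun f _ _ => hw f)
          intro f hf
          simp only [Finset.mem_filter] at hf
          obtain ⟨⟨_, v, hve, hvf⟩, hfP⟩ := hf
          exact Finset.mem_singleton.2 (huniq e heP f hfP v (Sym2.mem_toFinset.1 hve) hvf)
        have h2 : (((E.filter fun f => ∃ v ∈ e.toFinset, v ∈ f).filter
            fun f => f ∉ P).card : ℝ) ≤ ∑ v ∈ e.toFinset, F v := by
          have h : (E.filter fun f => ∃ v ∈ e.toFinset, v ∈ f).filter (fun f => f ∉ P) ⊆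
              e.toFinset.biUnion fun v => (E.filter fun e => v ∈ e).filter fun e => e ∉ P := by
            intro f hf
            simp only [Finset.mem_filter] at hf
            obtain ⟨⟨hfE, v, hve, hvf⟩, hfP⟩ := hf
            exact Finset.mem_biUnion.2 ⟨v, hve, by simp [hfE, hvf, hfP]⟩
          have := (Finset.card_le_card h).trans Finset.card_biUnion_le
          simp only [F]
          exact_mod_cast this
        rw [Finset.sum_singleton, hwP e heP, max_eq_right h] at h1
        have h3 : (((E.filter fun f => ∃ v ∈ e.toFinset, v ∈ f).filter
            fun f => f ∉ P).card : ℝ) / d ≤ (∑ v ∈ e.toFinset, F v) / d := by gcongr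
        linarith
    · left
      exact (if_neg heP).le
  obtain ⟨M, hM, hMw⟩ := exists_matching_weight_le d hd w hw E hE hv he
  have hMH : M.card ≤ matchNum H := le_csSup (bddAbove_matchings H)
    ⟨M, ⟨fun e heM => SimpleGraph.mem_edgeFinset.1 (hM.1 heM), hM.2⟩, rfl⟩
  have hnn : ∀ v, 0 ≤ ∑ e ∈ E with v ∈ e, w e := fun v => Finset.sum_nonneg fun e _ => hw e
  have hedge : ∀ e ∈ P, 1 / c ≤ ∑ v ∈ e.toFinset, ∑ f ∈ E with v ∈ f, w f := by
    intro e heP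
    by_cases heE : e ∈ E
    · rw [Finset.sum_congr rfl
        (fun v hv => hmem e heP heE v (Sym2.mem_toFinset.1 hv)), Finset.sum_add_distrib,
        Finset.sum_const, Sym2.card_toFinset_of_not_isDiag e (hE e heE), ← Finset.sum_div]
      have h1 : 1 - (∑ v ∈ e.toFinset, F v) / d ≤ w e := by
        rw [hwP e heP]; exact le_max_right _ _
      have h2 : 1 / c ≤ 1 := (div_le_one hc0).2 hc
      have h3 := hw e
      rw [two_nsmul]
      linarith
    · -- All edges of `H` at an end of `e` have weight `1/d`.
      have hfull : ∀ v ∈ e, ∑ f ∈ E with v ∈ f, w f = H.degree v / d := by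
        intro v hve
        have : ∀ f ∈ E.filter (fun f => v ∈ f), w f = 1 / d := by
          intro f hf
          rw [Finset.mem_filter] at hf
          refine if_neg fun hfP => heE ?_
          rw [← huniq e heP f hfP v hve hf.2]
          exact hf.1
        rw [Finset.sum_congr rfl this, Finset.sum_const, hdegE]
        simp [div_eq_mul_inv]
      have hbig : ∃ v ∈ e, (d : ℝ) / c ≤ H.degree v := by
        induction e with
        | _ x y =>
          have h := hker x y (hPG _ heP) (by simpa [hEdef] using heE)
          rcases max_choice (H.degree x) (H.degree y) with h' | h' <;> rw [h'] at h
          · exact ⟨x, by simp, h⟩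
          · exact ⟨y, by simp, h⟩
      obtain ⟨v, hve, hvd⟩ := hbig
      refine le_trans ?_ (Finset.single_le_sum (fun v _ => hnn v) (Sym2.mem_toFinset.2 hve))
      rw [hfull v hve, le_div_iff₀ hd0]
      calc 1 / c * d = d / c := by ring
        _ ≤ _ := hvd
  -- The pairs of ends of the edges of `P` are disjoint, so the bounds `hedge` add up.
  have hlow : (P.card : ℝ) * (1 / c) ≤ 2 * ∑ e ∈ E, w e := by
    rw [← sum_weighted_degree Finset.univ E hE (fun _ _ _ _ => Finset.mem_univ _) w]
    calc (P.card : ℝ) * (1 / c) = ∑ e ∈ P, 1 / c := by simp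
      _ ≤ ∑ e ∈ P, ∑ v ∈ e.toFinset, ∑ f ∈ E with v ∈ f, w f := Finset.sum_le_sum hedge
      _ = ∑ v ∈ P.biUnion Sym2.toFinset, ∑ f ∈ E with v ∈ f, w f := by
        rw [Finset.sum_biUnion]
        intro e he f hf hne
        refine Finset.disjoint_left.2 ?_
        intro v hve hvf
        exact hPdis e he f hf hne v (Sym2.mem_toFinset.1 hve) (Sym2.mem_toFinset.1 hvf)
      _ ≤ _ := Finset.sum_le_sum_of_subset_of_nonneg (Finset.subset_univ _) fun v _ _ => hnn v
  rw [← hPcard]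
  have hMH' : (M.card : ℝ) ≤ matchNum H := by exact_mod_cast hMH
  have h1 : (1 + 1 / (d : ℝ)) * M.card ≤ (1 + 1 / d) * matchNum H := by gcongr
  have h2 : (P.card : ℝ) * (1 / c) ≤ 2 * ((1 + 1 / d) * matchNum H) := by linarith
  calc (P.card : ℝ) = c * (P.card * (1 / c)) := by field_simp
    _ ≤ c * (2 * ((1 + 1 / d) * matchNum H)) := by gcongr
    _ = _ := by ring
end

section
/- Let G be a finite simple graph, d ≥ 1 an integer, H a subgraph of G in which every vertex has degree at most d, and M* a matching in G. Define f on the edges of H by f_e = 1/d if e ∉ M*, and f_{(u,v)} = max{1 − (deg_H(u) + deg_H(v) − 2)/d, 0} if (u,v) ∈ M* ∩ H. Then f is a fractional matching of H, i.e., for every vertex v, ∑_{e ∋ v, e ∈ H} f_e ≤ 1. -/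
/-!
Since `M` is a matching, at most one edge of `H` at a vertex `v` lies in `M`, and every other
edge at `v` has value `1/d`. If there is no matching edge at `v`, the sum is `deg v / d ≤ 1`.
If `wv ∈ M`, the other edges contribute `(deg v - 1)/d ≤ 1`, while the value of `wv` is at most
`1 - (deg v - 1)/d` because `deg w ≥ 1`.
-/

open Finset

/-- The fractional matching used in the proof of the kernel lemma (Lemma 4.3):
`f_e = 1/d` for `e ∉ M*`, and
`f_{(u,v)} = max{1 − (deg_H(u) + deg_H(v) − 2)/d, 0}` for `(u,v) ∈ M*`. -/
noncomputable def fKer {V : Type*} [Fintype V] [DecidableEq V]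
    (H : SimpleGraph V) [DecidableRel H.Adj] (M : Finset (Sym2 V)) (d : ℕ) :
    Sym2 V → ℝ :=
  Sym2.lift ⟨fun u v =>
    if s(u, v) ∈ M then
      max (1 - ((H.degree u : ℝ) + (H.degree v : ℝ) - 2) / (d : ℝ)) 0
    else 1 / (d : ℝ),
    fun u v => by
      simp only []
      rw [Sym2.eq_swap, add_comm ((H.degree u : ℝ)) ((H.degree v : ℝ))]⟩

/-- Feasibility of the fractional matching `f` from the proof of Lemma 4.3:
if every vertex has `H`-degree at most `d` and `M*` is a matching of `G`, then
for every vertex `v` the `f`-values of the edges of `H` at `v` sum to at most `1`. -/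
theorem fKer_is_fractional_matching {V : Type*} [Fintype V] [DecidableEq V]
    (G H : SimpleGraph V) [DecidableRel H.Adj] (hHG : H ≤ G)
    (d : ℕ) (hd : 1 ≤ d) (hdeg : ∀ v, H.degree v ≤ d)
    (M : Finset (Sym2 V)) (hM : IsMatchingSet G M) :
    ∀ v : V, ∑ u ∈ H.neighborFinset v, fKer H M d s(u, v) ≤ 1 := by
  intro v
  have hd0 : (0 : ℝ) < d := by exact_mod_cast hd
  have hdv : (H.degree v : ℝ) ≤ d := by exact_mod_cast hdeg v
  by_cases h : ∃ w ∈ H.neighborFinset v, s(w, v) ∈ M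
  · obtain ⟨w, hw, hwM⟩ := h
    have hrest : ∀ u ∈ (H.neighborFinset v).erase w, fKer H M d s(u, v) = 1 / (d : ℝ) := by
      intro u hu
      have hne : s(w, v) ≠ s(u, v) := fun he =>
        (Finset.ne_of_mem_erase hu) (Sym2.congr_left.mp he).symm
      have huM : s(u, v) ∉ M := fun huM =>
        hM.2 _ hwM _ huM hne v (Sym2.mem_mk_right w v) (Sym2.mem_mk_right u v)
      simp [fKer, huM]
    have hpos : 0 < H.degree v := by
      rw [← SimpleGraph.card_neighborFinset_eq_degree]
      exact Finset.card_pos.mpr ⟨w, hw⟩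
    -- The degree of `w` is at least `1` because `v` is an `H`-neighbour of `w`.
    have hwpos : (1 : ℝ) ≤ H.degree w := by
      have : 0 < H.degree w := by
        rw [SimpleGraph.degree_pos_iff_exists_adj]
        exact ⟨v, ((H.mem_neighborFinset v w).mp hw).symm⟩
      exact_mod_cast this
    rw [← Finset.add_sum_erase _ _ hw, Finset.sum_congr rfl hrest, Finset.sum_const,
      Finset.card_erase_of_mem hw, SimpleGraph.card_neighborFinset_eq_degree, nsmul_eq_mul,
      Nat.cast_sub hpos]
    have hval : fKer H M d s(w, v) =
        max (1 - ((H.degree w : ℝ) + (H.degree v : ℝ) - 2) / (d : ℝ)) 0 := by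
      simp [fKer, hwM]
    rw [hval, ← le_sub_iff_add_le]
    refine max_le ?_ ?_
    · have : ((H.degree v : ℝ) - 1) / d ≤ ((H.degree w : ℝ) + H.degree v - 2) / d :=
        div_le_div_of_nonneg_right (by linarith) hd0.le
      push_cast
      rw [mul_one_div]
      linarith
    · push_cast
      rw [mul_one_div, sub_nonneg, div_le_one hd0]
      linarith
  · push Not at h
    have hall : ∀ u ∈ H.neighborFinset v, fKer H M d s(u, v) = 1 / (d : ℝ) := by
      intro u hu
      simp [fKer, h u hu]
    rw [Finset.sum_congr rfl hall, Finset.sum_const,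
      SimpleGraph.card_neighborFinset_eq_degree, nsmul_eq_mul, mul_one_div, div_le_one hd0]
    exact hdv
end

section
/- Let G be a finite simple graph, c ≥ 1 real, d ≥ 1 an integer, and H a subgraph of G such that every vertex has degree at most d in H and every edge of G not in H has an endpoint v with deg_H(v) ≥ d/c. Let M* be a maximum matching of G, and define f on the edges of H by f_e = 1/d if e ∉ M*, and f_{(u,v)} = max{1 − (deg_H(u) + deg_H(v) − 2)/d, 0} if (u,v) ∈ M* ∩ H. Then ∑_{e ∈ E(H)} f_e ≥ μ(G)/(2c). -/
/-!
Write `F v` for the sum of `f_e` over the edges `e` of `H` incident to `v`. Summing over vertices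
counts every edge twice, so `2 ∑ f_e = ∑ F v`, which is at least the sum of `F u + F v` over the
edges `uv` of the matching `M` (their endpoints are distinct vertices, and `F ≥ 0`). It is enough
that each such `uv` satisfies `F u + F v ≥ 1/c`. All edges of `H` at `u` or `v` other than `uv`
avoid `M`, hence have weight `1/d`.
* If `uv ∉ H`, then `F u + F v = (deg u + deg v)/d ≥ 1/c` by the kernel condition.
* If `uv ∈ H`, put `x = (deg u + deg v - 2)/d`; then `F u + F v = 2 max (1 - x) 0 + x ≥ 1 ≥ 1/c`.
-/

open Finset

/-- The total weight `∑_{e ∋ v} f_e` of the edges of `H` at the vertex `v`. -/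
noncomputable def vertexLoad {V : Type*} [Fintype V] [DecidableEq V]
    (H : SimpleGraph V) [DecidableRel H.Adj] (M : Finset (Sym2 V)) (d : ℕ) (v : V) : ℝ :=
  ∑ e ∈ H.incidenceFinset v, fKer H M d e

section Load

variable {V : Type*} [Fintype V] [DecidableEq V] (H : SimpleGraph V) [DecidableRel H.Adj]
  (M : Finset (Sym2 V)) (d : ℕ)

lemma fKer_of_mem {u v : V} (h : s(u, v) ∈ M) :
    fKer H M d s(u, v) =
      max (1 - ((H.degree u : ℝ) + (H.degree v : ℝ) - 2) / (d : ℝ)) 0 := by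
  simp [fKer, h]

lemma fKer_of_notMem {e : Sym2 V} (h : e ∉ M) : fKer H M d e = 1 / (d : ℝ) := by
  induction e with
  | _ u v => simp [fKer, h]

lemma fKer_nonneg (e : Sym2 V) : 0 ≤ fKer H M d e := by
  induction e with
  | _ u v =>
    by_cases h : s(u, v) ∈ M
    · rw [fKer_of_mem H M d h]
      exact le_max_right _ _
    · rw [fKer_of_notMem H M d h]
      positivity

lemma vertexLoad_nonneg (v : V) : 0 ≤ vertexLoad H M d v :=
  Finset.sum_nonneg fun e _ => fKer_nonneg H M d e

lemma sum_vertexLoad :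
    ∑ v, vertexLoad H M d v = 2 * ∑ e ∈ H.edgeFinset, fKer H M d e := by
  have h1 : ∀ v, vertexLoad H M d v =
      ∑ e ∈ H.edgeFinset, if v ∈ e then fKer H M d e else 0 := by
    intro v
    rw [vertexLoad, H.incidenceFinset_eq_filter v, Finset.sum_filter]
  simp_rw [h1]
  rw [Finset.sum_comm, Finset.mul_sum]
  refine Finset.sum_congr rfl fun e he => ?_
  have hcard : e.toFinset.card = 2 :=
    Sym2.card_toFinset_of_not_isDiag e (H.not_isDiag_of_mem_edgeFinset he)
  have hfil : (Finset.univ.filter fun v => v ∈ e) = e.toFinset := by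
    ext v
    simp
  rw [← Finset.sum_filter, hfil, Finset.sum_const, hcard]
  simp

variable {M} {G : SimpleGraph V}

lemma vertexLoad_of_notMem_edge (hM : IsMatchingSet G M) {m : Sym2 V} (hm : m ∈ M)
    (hmH : m ∉ H.edgeSet) {v : V} (hv : v ∈ m) :
    vertexLoad H M d v = (H.degree v : ℝ) / d := by
  have h : ∀ e ∈ H.incidenceFinset v, fKer H M d e = 1 / (d : ℝ) := by
    intro e he
    rw [SimpleGraph.mem_incidenceFinset] at he
    refine fKer_of_notMem H M d fun heM => ?_
    exact hM.2 m hm e heM (fun h => hmH (h ▸ he.1)) v hv he.2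
  rw [vertexLoad, Finset.sum_congr rfl h, Finset.sum_const, H.card_incidenceFinset_eq_degree]
  simp [div_eq_mul_inv]

lemma vertexLoad_of_mem_edge (hM : IsMatchingSet G M) {m : Sym2 V} (hm : m ∈ M)
    (hmH : m ∈ H.edgeSet) {v : V} (hv : v ∈ m) :
    vertexLoad H M d v = fKer H M d m + ((H.degree v : ℝ) - 1) / d := by
  have hmem : m ∈ H.incidenceFinset v := by
    rw [SimpleGraph.mem_incidenceFinset]
    exact ⟨hmH, hv⟩
  have h : ∀ e ∈ (H.incidenceFinset v).erase m, fKer H M d e = 1 / (d : ℝ) := by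
    intro e he
    rw [Finset.mem_erase, SimpleGraph.mem_incidenceFinset] at he
    refine fKer_of_notMem H M d fun heM => ?_
    exact hM.2 m hm e heM he.1.symm v hv he.2.2
  rw [vertexLoad, ← Finset.add_sum_erase _ _ hmem, Finset.sum_congr rfl h, Finset.sum_const,
    nsmul_eq_mul, Finset.cast_card_erase_of_mem hmem, H.card_incidenceFinset_eq_degree]
  ring

/-- The local estimate: each matching edge `uv` has endpoint loads adding up to at least `1/c`. -/
lemma inv_le_load_add_load (c : ℝ) (hc : 1 ≤ c) (hd : 1 ≤ d)
    (hker : ∀ u v : V, G.Adj u v → ¬H.Adj u v →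
      (d : ℝ) / c ≤ ((max (H.degree u) (H.degree v) : ℕ) : ℝ))
    (hM : IsMatchingSet G M) {u v : V} (hm : s(u, v) ∈ M) :
    1 / c ≤ vertexLoad H M d u + vertexLoad H M d v := by
  have hd0 : (0 : ℝ) < d := by exact_mod_cast hd
  have hu : u ∈ s(u, v) := Sym2.mem_mk_left u v
  have hv : v ∈ s(u, v) := Sym2.mem_mk_right u v
  by_cases hH : s(u, v) ∈ H.edgeSet
  · rw [vertexLoad_of_mem_edge H d hM hm hH hu, vertexLoad_of_mem_edge H d hM hm hH hv,
      fKer_of_mem H M d hm]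
    have hc1 : 1 / c ≤ 1 := by
      rw [div_le_one (by linarith)]
      exact hc
    have hx : ((H.degree u : ℝ) - 1) / d + ((H.degree v : ℝ) - 1) / d =
        ((H.degree u : ℝ) + (H.degree v : ℝ) - 2) / (d : ℝ) := by ring
    have h1 := le_max_left (1 - ((H.degree u : ℝ) + (H.degree v : ℝ) - 2) / (d : ℝ)) 0
    have h2 := le_max_right (1 - ((H.degree u : ℝ) + (H.degree v : ℝ) - 2) / (d : ℝ)) 0
    linarith
  · rw [vertexLoad_of_notMem_edge H d hM hm hH hu, vertexLoad_of_notMem_edge H d hM hm hH hv,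
      ← add_div, le_div_iff₀ hd0]
    have hk := hker u v (hM.1 _ hm) hH
    have hmax : ((max (H.degree u) (H.degree v) : ℕ) : ℝ) ≤ H.degree u + H.degree v := by
      exact_mod_cast max_le (Nat.le_add_right _ _) (Nat.le_add_left _ _)
    calc 1 / c * d = d / c := by ring
      _ ≤ _ := hk.trans hmax

end Load

/-- Inequality (2) in the proof of Lemma 4.3: a deterministic `(c,d,0)`-kernel `H`
of `G` supports a fractional matching (namely `fKer`, built from a maximum
matching `M*` of `G`) of total value at least `μ(G)/(2c)`. -/
theorem fKer_total_value_ge {V : Type*} [Fintype V] [DecidableEq V]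
    (G H : SimpleGraph V) [DecidableRel H.Adj] (hHG : H ≤ G)
    (c : ℝ) (hc : 1 ≤ c) (d : ℕ) (hd : 1 ≤ d)
    (hdeg : ∀ v, H.degree v ≤ d)
    (hker : ∀ u v : V, G.Adj u v → ¬H.Adj u v →
      (d : ℝ) / c ≤ ((max (H.degree u) (H.degree v) : ℕ) : ℝ))
    (M : Finset (Sym2 V)) (hM : IsMatchingSet G M) (hMmax : M.card = matchNum G) :
    (matchNum G : ℝ) / (2 * c) ≤ ∑ e ∈ H.edgeFinset, fKer H M d e := by
  have hc0 : 0 < c := by linarith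
  have hdisj : (M : Set (Sym2 V)).PairwiseDisjoint Sym2.toFinset := by
    intro e he f hf hef
    refine Finset.disjoint_left.mpr fun v hve hvf => ?_
    exact hM.2 e he f hf hef v (Sym2.mem_toFinset.mp hve) (Sym2.mem_toFinset.mp hvf)
  have hlocal : ∀ m ∈ M, 1 / c ≤ ∑ v ∈ m.toFinset, vertexLoad H M d v := by
    intro m hm
    induction m with
    | _ u v =>
      have huv : u ≠ v := (hM.1 _ hm : G.Adj u v).ne
      rw [Sym2.toFinset_mk_eq, Finset.sum_pair huv]
      exact inv_le_load_add_load H d c hc hd hker hM hm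
  have hsum : (M.card : ℝ) * (1 / c) ≤ 2 * ∑ e ∈ H.edgeFinset, fKer H M d e := by
    calc (M.card : ℝ) * (1 / c) = ∑ _m ∈ M, 1 / c := by simp
      _ ≤ ∑ m ∈ M, ∑ v ∈ m.toFinset, vertexLoad H M d v := Finset.sum_le_sum hlocal
      _ = ∑ v ∈ M.biUnion Sym2.toFinset, vertexLoad H M d v := (Finset.sum_biUnion hdisj).symm
      _ ≤ ∑ v, vertexLoad H M d v :=
        Finset.sum_le_sum_of_subset_of_nonneg (Finset.subset_univ _)
          fun v _ _ => vertexLoad_nonneg H M d v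
      _ = _ := sum_vertexLoad H M d
  rw [← hMmax]
  have : (M.card : ℝ) / (2 * c) = (M.card : ℝ) * (1 / c) / 2 := by field_simp
  rw [this]
  linarith
end

section
/- Let G be a finite simple graph, d ≥ 1 an integer, and f a fractional matching of G (f_e ≥ 0 for every edge e and ∑_{e ∋ v} f_e ≤ 1 for every vertex v) such that d·f_e is a nonnegative integer for every edge e and the set of edges e with f_e > 1/d forms a matching in G. Then μ(G) ≥ (d/(d+1)) · ∑_e f_e. -/
/-!
The inequality is obtained from the Tutte–Berge formula, without colouring edges. Put
`w v u = d · f(vu)`, a symmetric array of natural numbers supported on the edges of `G` with row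
sums at most `d`, in which every row has at most one entry `≥ 2`. The claim says that the sum of
all entries of `w` is at most `2 (d + 1) μ(G)`.

* For a vertex set `C` of odd size, the entries of `w` inside `C` sum to at most `(d + 1)(#C - 1)`
  (`odd_set_bound`); for any other set `C` the row sums give the bound `d · #C`.
* Tutte–Berge provides a set `U` such that `G - U` has at least `#V + #U - 2 μ(G)` odd components
  (`exists_berge_witness`). It is deduced from Tutte's theorem applied to the join of `G` with a
  complete graph on `#V - 2 μ(G) - 2` vertices, which has no perfect matching.
* The rows and columns indexed by `U` contribute at most `2 d · #U`, and all other nonzero entries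
  lie inside components of `G - U`; adding the bounds gives the claim (`weight_le_matchNum`).
-/

open Finset

lemma IsMatchingSet.card_le_matchNum {V : Type*} [Fintype V] [DecidableEq V] {G : SimpleGraph V}
    {M : Finset (Sym2 V)} (hM : IsMatchingSet G M) : #M ≤ matchNum G := by
  refine le_csSup ⟨Fintype.card (Sym2 V), ?_⟩ ⟨M, hM, rfl⟩
  rintro k ⟨N, -, rfl⟩
  exact card_le_univ N

/-- The join of `G` with a complete graph on `k` new vertices. -/
def joinComplete {V : Type*} (G : SimpleGraph V) (k : ℕ) : SimpleGraph (V ⊕ Fin k) where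
  Adj
    | .inl u, .inl v => G.Adj u v
    | .inr i, .inr j => i ≠ j
    | _, _ => True
  symm := ⟨by
    rintro (u | i) (v | j) h
    · exact h.symm
    · trivial
    · trivial
    · exact h.symm⟩
  loopless := ⟨by
    rintro (u | i) h
    · exact G.loopless.irrefl u h
    · exact h rfl⟩

/-- A perfect matching of the join restricts to a matching of `G` missing at most `k` vertices. -/
lemma card_le_of_perfectMatching {V : Type*} [Fintype V] [DecidableEq V] (G : SimpleGraph V)
    (k : ℕ) (M : (joinComplete G k).Subgraph) (hM : M.IsPerfectMatching) :
    Fintype.card V ≤ 2 * matchNum G + k := by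
  classical
  rw [SimpleGraph.Subgraph.isPerfectMatching_iff] at hM
  let H : SimpleGraph V :=
    { Adj := fun u v => M.Adj (.inl u) (.inl v)
      symm := ⟨fun _ _ h => M.adj_symm h⟩
      loopless := ⟨fun u h => (M.adj_sub h).ne rfl⟩ }
  have hHG : ∀ u v, H.Adj u v → G.Adj u v := fun u v h => M.adj_sub h
  have huniq : ∀ u v v', H.Adj u v → H.Adj u v' → v = v' := fun u v v' h h' =>
    Sum.inl_injective ((hM (.inl u)).unique h h')
  have hmatch : IsMatchingSet G H.edgeFinset := by
    constructor
    · intro e he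
      induction e with | h a b => exact hHG a b (by simpa using he)
    · intro e he e' he' hne v hv hv'
      obtain ⟨a, rfl⟩ := Sym2.mem_iff_exists.1 hv
      obtain ⟨b, rfl⟩ := Sym2.mem_iff_exists.1 hv'
      simp only [SimpleGraph.mem_edgeFinset, SimpleGraph.mem_edgeSet] at he he'
      exact hne (by rw [huniq v a b he he'])
  have h1 := hmatch.card_le_matchNum
  have h2 := H.sum_degrees_eq_twice_card_edges
  -- the vertices of `G` matched outside `G` inject into the new vertices
  have h3 : #{v | H.degree v = 0} ≤ k := by
    have hex : ∀ v, H.degree v = 0 → ∃ i : Fin k, M.Adj (.inl v) (.inr i) := by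
      intro v hv
      obtain ⟨w | i, hw, -⟩ := hM (.inl v)
      · have : 0 < H.degree v := (H.degree_pos_iff_exists_adj v).2 ⟨w, hw⟩
        omega
      · exact ⟨i, hw⟩
    choose g hg using hex
    have := Fintype.card_le_of_injective
      (fun v : {v // H.degree v = 0} => g v.1 v.2) (fun a b hab => by
        have h1 := (hg a.1 a.2).symm
        have h2 := (hg b.1 b.2).symm
        simp only at hab
        rw [hab] at h1
        exact Subtype.ext (Sum.inl_injective ((hM _).unique h1 h2)))
    simpa [Fintype.card_subtype] using this
  have h4 : #{v | ¬ H.degree v = 0} ≤ ∑ v, H.degree v := by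
    rw [card_filter]
    exact sum_le_sum fun v _ => by split_ifs <;> omega
  have h5 := card_filter_add_card_filter_not (s := (univ : Finset V)) (fun v => H.degree v = 0)
  rw [card_univ] at h5
  omega

universe u in
/-- The nontrivial half of the Tutte–Berge formula, when at least two vertices are missed by
every matching. The colouring `c` names the components of `G - U` (its values on `U` are
irrelevant). -/
lemma exists_berge_witness {V : Type u} [Fintype V] [DecidableEq V] (G : SimpleGraph V)
    (h : 2 * matchNum G + 2 ≤ Fintype.card V) :
    ∃ (U : Finset V) (ι : Type u) (_ : Fintype ι) (_ : DecidableEq ι) (c : V → ι),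
      (∀ u ∉ U, ∀ v ∉ U, G.Adj u v → c u = c v) ∧
      Fintype.card V + #U ≤ 2 * matchNum G + #{i | Odd #{v ∈ Uᶜ | c v = i}} := by
  classical
  obtain ⟨k, hk⟩ := Nat.exists_eq_add_of_le h
  set J := joinComplete G k with hJ
  have hno : ¬ ∃ M : J.Subgraph, M.IsPerfectMatching := by
    rintro ⟨M, hM⟩
    have := card_le_of_perfectMatching G k M hM
    omega
  rw [SimpleGraph.tutte] at hno
  push Not at hno
  obtain ⟨S, hS⟩ := hno
  unfold SimpleGraph.IsTutteViolator at hS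
  set D := (⊤ : J.Subgraph).deleteVerts S with hD
  have hmem : ∀ x, x ∈ D.verts ↔ x ∉ S := fun x => by simp [hD]
  have hverts : D.verts.ncard + S.ncard = Fintype.card V + k := by
    have : D.verts = Sᶜ := by ext x; simp [hmem]
    rw [this, add_comm, Set.ncard_add_ncard_compl]
    simp
  have hpar := D.coe.odd_ncard_oddComponents
  have hcard : Nat.card D.verts = D.verts.ncard := Nat.card_coe_set_eq _
  rw [hcard] at hpar
  have hodd2 : S.ncard + 2 ≤ D.coe.oddComponents.ncard := by
    by_contra hlt
    have he : D.coe.oddComponents.ncard = S.ncard + 1 := by omega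
    rw [he, Nat.odd_iff, Nat.odd_iff] at hpar
    omega
  -- a surviving new vertex would be adjacent to everything, leaving one component
  have hnew : ∀ i : Fin k, Sum.inr i ∈ S := by
    intro i
    by_contra hi
    have hsub : Subsingleton D.coe.ConnectedComponent := by
      have hconn : D.coe.Connected := by
        rw [SimpleGraph.connected_iff_exists_forall_reachable]
        refine ⟨⟨.inr i, (hmem _).2 hi⟩, fun ⟨x, hx⟩ => ?_⟩
        by_cases hxi : x = .inr i
        · subst hxi; exact SimpleGraph.Reachable.refl _
        · apply SimpleGraph.Adj.reachable
          have hx' := (hmem _).1 hx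
          have : J.Adj (.inr i) x := by
            rcases x with v | j
            · trivial
            · exact fun hij => hxi (by rw [hij])
          simp [hD, hi, hx', this]
      exact hconn.preconnected.subsingleton_connectedComponent
    have := Set.ncard_le_one_of_subsingleton D.coe.oddComponents
    omega
  let U : Finset V := {v | Sum.inl v ∈ S}
  have hSU : S.ncard = #U + k := by
    have : S = ((U.disjSum (univ : Finset (Fin k)) : Finset _) : Set (V ⊕ Fin k)) := by
      ext x
      rcases x with v | i
      · simp [U]
      · simp [hnew]
    rw [this, Set.ncard_coe_finset, card_disjSum]
    simp
  let c : V → Option D.coe.ConnectedComponent := fun v =>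
    if hv : Sum.inl v ∉ S then some (D.coe.connectedComponentMk ⟨.inl v, (hmem _).2 hv⟩) else none
  refine ⟨U, Option D.coe.ConnectedComponent, Fintype.ofFinite _, inferInstance, c, ?_, ?_⟩
  · intro u hu v hv huv
    have hu' : Sum.inl u ∉ S := by simpa [U] using hu
    have hv' : Sum.inl v ∉ S := by simpa [U] using hv
    have hJuv : J.Adj (.inl u) (.inl v) := huv
    simp only [c, hu', hv', not_false_eq_true, dite_true, Option.some.injEq]
    rw [SimpleGraph.ConnectedComponent.eq]
    apply SimpleGraph.Adj.reachable
    simp [hD, hu', hv', hJuv]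
  · have hfib : ∀ C : D.coe.ConnectedComponent, #{v ∈ Uᶜ | c v = some C} = C.supp.ncard := by
      intro C
      rw [← Set.ncard_image_of_injective C.supp Subtype.val_injective,
        ← card_map Function.Embedding.inl, ← Set.ncard_coe_finset]
      congr 1
      ext x
      rcases x with v | i
      · by_cases hv : Sum.inl v ∈ S <;> simp [U, c, hv, hmem]
      · simp [hnew, hmem]
    have hle : D.coe.oddComponents.ncard ≤
        (↑({i | Odd #{v ∈ Uᶜ | c v = i}} : Finset _) :
          Set (Option D.coe.ConnectedComponent)).ncard := by
      rw [← Set.ncard_image_of_injective _ (Option.some_injective _)]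
      apply Set.ncard_le_ncard _ (Set.toFinite _)
      rintro _ ⟨C, hC, rfl⟩
      simpa [hfib] using hC
    rw [Set.ncard_coe_finset] at hle
    refine le_trans (b := 2 * matchNum G + D.coe.oddComponents.ncard) (by omega)
      (Nat.add_le_add_left ?_ _)
    convert hle

/-- Edmonds' odd-set inequality, scaled by `d + 1`. If `#C ≤ d`, then by parity some vertex of
`C` has no partner of weight at least two inside `C`, so its row sum is at most `#C - 1`. -/
lemma odd_set_bound {V : Type*} [DecidableEq V] (d : ℕ) (w : V → V → ℕ)
    (hsymm : ∀ u v, w u v = w v u) (hdiag : ∀ v, w v v = 0)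
    (C : Finset V) (hdeg : ∀ v ∈ C, ∑ u ∈ C, w v u ≤ d)
    (hbig : ∀ v u u', 2 ≤ w v u → 2 ≤ w v u' → u = u') (hC : Odd #C) :
    ∑ v ∈ C, ∑ u ∈ C, w v u ≤ (d + 1) * (#C - 1) := by
  classical
  obtain ⟨m, hm⟩ := hC
  have hm' : #C - 1 = 2 * m := by omega
  rcases Nat.lt_or_ge d #C with hlt | hge
  · calc ∑ v ∈ C, ∑ u ∈ C, w v u ≤ ∑ v ∈ C, d := sum_le_sum hdeg
      _ = #C * d := by simp
      _ ≤ (d + 1) * (#C - 1) := by rw [hm', hm]; nlinarith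
  · have hfree : ∃ v ∈ C, ∀ u ∈ C, w v u ≤ 1 := by
      by_contra! hcon
      choose! g hgC hg using hcon
      have hgg : ∀ v ∈ C, g (g v) = v := fun v hv =>
        hbig (g v) _ _ (hg _ (hgC v hv)) (by rw [hsymm]; exact hg v hv)
      have hsum : ∑ v ∈ C, (1 : ZMod 2) = 0 :=
        sum_involution (fun v _ => g v) (fun _ _ => by decide)
          (fun v hv _ heq => by
            have := hg v hv
            rw [heq, hdiag] at this
            omega)
          hgC hgg
      rw [sum_const, nsmul_eq_mul, mul_one, ZMod.natCast_eq_zero_iff] at hsum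
      omega
    obtain ⟨v, hv, hvw⟩ := hfree
    have hrow : ∑ u ∈ C, w v u ≤ #C - 1 := by
      rw [← sum_erase C (hdiag v), ← card_erase_of_mem hv]
      exact (sum_le_sum fun u hu => hvw u (mem_of_mem_erase hu)).trans (by simp)
    have hrest : ∑ v' ∈ C.erase v, ∑ u ∈ C, w v' u ≤ (#C - 1) * d := by
      rw [← card_erase_of_mem hv]
      exact (sum_le_sum fun u hu => hdeg u (mem_of_mem_erase hu)).trans (by simp)
    rw [← add_sum_erase C _ hv]
    linarith

/-- The integral form of the rounding inequality. The factor `2` appears because the sum over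
ordered pairs counts every edge twice. If some matching misses at most one vertex, the row sums or
the odd-set bound for the whole vertex set suffice. -/
lemma weight_le_matchNum {V : Type*} [Fintype V] [DecidableEq V] (G : SimpleGraph V) (d : ℕ)
    (w : V → V → ℕ) (hsymm : ∀ u v, w u v = w v u) (hadj : ∀ u v, ¬ G.Adj u v → w u v = 0)
    (hdeg : ∀ v, ∑ u, w v u ≤ d) (hbig : ∀ v u u', 2 ≤ w v u → 2 ≤ w v u' → u = u') :
    ∑ v, ∑ u, w v u ≤ 2 * (d + 1) * matchNum G := by
  classical
  have hdiag : ∀ v, w v v = 0 := fun v => hadj v v (G.loopless.irrefl v)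
  have hdeg' : ∀ (s : Finset V) v, ∑ u ∈ s, w v u ≤ d := fun s v =>
    (sum_le_sum_of_subset (subset_univ s)).trans (hdeg v)
  have hset : ∀ s : Finset V, ∑ v ∈ s, ∑ u ∈ s, w v u + (d + 1) * (if Odd #s then 1 else 0)
      ≤ (d + 1) * #s := by
    intro s
    split_ifs with hs
    · have := odd_set_bound d w hsymm hdiag s (fun v _ => hdeg' s v) hbig hs
      obtain ⟨m, hm⟩ := hs
      rw [hm, Nat.add_sub_cancel] at this
      rw [hm]
      linarith
    · have : ∑ v ∈ s, ∑ u ∈ s, w v u ≤ ∑ v ∈ s, d := sum_le_sum fun v _ => hdeg' s v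
      rw [sum_const, smul_eq_mul] at this
      linarith
  have huniv := hset univ
  rw [card_univ] at huniv
  rcases Nat.lt_or_ge (Fintype.card V) (2 * matchNum G + 2) with hlt | hge
  · split_ifs at huniv with ho
    · have : Fintype.card V ≤ 2 * matchNum G + 1 := by omega
      nlinarith
    · have : Fintype.card V ≤ 2 * matchNum G := by
        rw [Nat.odd_iff] at ho
        omega
      nlinarith
  · obtain ⟨U, ι, _, _, c, hc, hU⟩ := exists_berge_witness G hge
    have hU1 : ∑ v ∈ U, ∑ u, w v u ≤ #U * d :=
      (sum_le_sum fun v _ => hdeg v).trans (by simp)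
    have hU2 : ∑ v ∈ Uᶜ, ∑ u ∈ U, w v u ≤ #U * d := by
      rw [sum_comm]
      refine (sum_le_sum fun u _ => ?_).trans (by simp : ∑ u ∈ U, d ≤ #U * d)
      simp_rw [hsymm _ u]
      exact hdeg' _ u
    have hU3 : ∑ v ∈ Uᶜ, ∑ u ∈ Uᶜ, w v u
        = ∑ i, ∑ v ∈ Uᶜ with c v = i, ∑ u ∈ Uᶜ with c u = i, w v u := by
      rw [← sum_fiberwise Uᶜ c]
      refine sum_congr rfl fun i _ => sum_congr rfl fun v hv => ?_
      rw [mem_filter, mem_compl] at hv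
      rw [sum_filter]
      refine sum_congr rfl fun u hu => ?_
      split_ifs with hui
      · rfl
      · refine hadj v u fun hvu => hui ?_
        rw [← hc v hv.1 u (mem_compl.1 hu) hvu, hv.2]
    have hU4 := sum_le_sum fun i (_ : i ∈ univ) => hset {v ∈ Uᶜ | c v = i}
    rw [sum_add_distrib, ← hU3, ← mul_sum, ← mul_sum, ← card_filter,
      ← card_eq_sum_card_fiberwise (fun _ _ => mem_coe.2 (mem_univ _))] at hU4
    have hsplit : ∑ v, ∑ u, w v u = ∑ v ∈ U, ∑ u, w v u + ∑ v ∈ Uᶜ, ∑ u ∈ U, w v u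
        + ∑ v ∈ Uᶜ, ∑ u ∈ Uᶜ, w v u := by
      rw [← sum_add_sum_compl U, add_assoc, ← sum_add_distrib]
      congr 1
      exact sum_congr rfl fun v _ => (sum_add_sum_compl U _).symm
    have hUc : #Uᶜ + #U = Fintype.card V := card_compl_add_card U
    have hmul := Nat.mul_le_mul_left (d + 1) hU
    rw [← hUc] at hmul
    nlinarith

lemma sum_adj_eq_two_mul {V : Type*} [Fintype V] [DecidableEq V] (G : SimpleGraph V)
    [DecidableRel G.Adj] (f : Sym2 V → ℝ) :
    ∑ v, ∑ u ∈ G.neighborFinset v, f s(u, v) = 2 * ∑ e ∈ G.edgeFinset, f e := by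
  have h1 : ∑ v, ∑ u ∈ G.neighborFinset v, f s(u, v)
      = ∑ e ∈ G.edgeFinset, ∑ v, if v ∈ e then f e else 0 := by
    rw [sum_comm]
    refine sum_congr rfl fun v _ => ?_
    rw [← sum_filter]
    refine sum_bij (fun u _ => s(u, v)) ?_ ?_ ?_ ?_
    · intro u hu
      simpa [SimpleGraph.adj_comm] using hu
    · intro a _ b _ hab
      exact Sym2.congr_left.1 hab
    · intro e he
      rw [mem_filter] at he
      obtain ⟨u, rfl⟩ := Sym2.mem_iff_exists.1 he.2
      exact ⟨u, by simpa using he.1, Sym2.eq_swap⟩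
    · intros; rfl
  rw [h1, mul_sum]
  refine sum_congr rfl fun e he => ?_
  induction e with | h a b =>
  have hab : a ≠ b := by
    rw [SimpleGraph.mem_edgeFinset, SimpleGraph.mem_edgeSet] at he
    exact he.ne
  rw [← sum_filter, show ({v | v ∈ s(a, b)} : Finset V) = {a, b} by ext; simp, sum_pair hab]
  ring

/-- Inequality (3) in the proof of Lemma 4.3 (rounding via Vizing-type edge
coloring): if `f` is a fractional matching of `G` such that `d·f_e` is a
nonnegative integer for every edge and the edges with `f_e > 1/d` form a
matching, then `μ(G) ≥ (d/(d+1))·∑_e f_e`. -/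
theorem fractional_rounding_vizing {V : Type*} [Fintype V] [DecidableEq V]
    (G : SimpleGraph V) [DecidableRel G.Adj] (d : ℕ) (hd : 1 ≤ d)
    (f : Sym2 V → ℝ)
    (hnn : ∀ e ∈ G.edgeFinset, 0 ≤ f e)
    (hfm : ∀ v : V, ∑ u ∈ G.neighborFinset v, f s(u, v) ≤ 1)
    (hint : ∀ e ∈ G.edgeFinset, ∃ m : ℕ, f e = (m : ℝ) / (d : ℝ))
    (hbig : IsMatchingSet G (G.edgeFinset.filter (fun e => 1 / (d : ℝ) < f e))) :
    ((d : ℝ) / ((d : ℝ) + 1)) * ∑ e ∈ G.edgeFinset, f e ≤ (matchNum G : ℝ) := by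
  have hd0 : (0 : ℝ) < d := by exact_mod_cast hd
  choose! m hm using hint
  have hm' : ∀ u v, G.Adj u v → (m s(u, v) : ℝ) = d * f s(u, v) := fun u v h => by
    rw [hm _ (by simpa using h)]
    field_simp
  let w : V → V → ℕ := fun v u => if G.Adj v u then m s(u, v) else 0
  have hrow : ∀ v, ((∑ u, w v u : ℕ) : ℝ) = d * ∑ u ∈ G.neighborFinset v, f s(u, v) := by
    intro v
    rw [SimpleGraph.neighborFinset_eq_filter, ← sum_filter, Nat.cast_sum, mul_sum]
    exact sum_congr rfl fun u hu => hm' u v (by simpa using (mem_filter.1 hu).2.symm)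
  have hlarge : ∀ v u, 2 ≤ w v u →
      s(u, v) ∈ G.edgeFinset.filter (fun e => 1 / (d : ℝ) < f e) := by
    intro v u h
    have hvu : G.Adj v u := by
      by_contra hn
      simp [w, hn] at h
    have h2 : (2 : ℝ) ≤ d * f s(u, v) := by
      rw [← hm' u v hvu.symm]
      simp only [w, hvu, if_true] at h
      exact_mod_cast h
    rw [mem_filter]
    refine ⟨by simpa using hvu.symm, ?_⟩
    rw [div_lt_iff₀ hd0]
    linarith
  have hmain := weight_le_matchNum G d w
    (fun u v => by simp only [w, G.adj_comm u v, Sym2.eq_swap])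
    (fun u v h => by simp [w, h])
    (fun v => by
      have : ((∑ u, w v u : ℕ) : ℝ) ≤ d := by
        rw [hrow]
        nlinarith [hfm v]
      exact_mod_cast this)
    (fun v u u' h h' => by
      by_contra hne
      exact hbig.2 _ (hlarge v u h) _ (hlarge v u' h') (fun h => hne (Sym2.congr_left.1 h)) v
        (by simp) (by simp))
  have htot : ((∑ v, ∑ u, w v u : ℕ) : ℝ) = d * (2 * ∑ e ∈ G.edgeFinset, f e) := by
    rw [Nat.cast_sum, ← sum_adj_eq_two_mul, mul_sum]
    exact sum_congr rfl fun v _ => hrow v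
  have hmain' : ((∑ v, ∑ u, w v u : ℕ) : ℝ) ≤ 2 * (d + 1) * matchNum G := by
    exact_mod_cast hmain
  rw [htot] at hmain'
  rw [div_mul_eq_mul_div, div_le_iff₀ (by positivity)]
  linarith
end

section
/- Let 1 ≤ k ≤ n be integers and let S be a uniformly random k-element subset of {1, …, n}. For i ∈ {1, …, n} let X_i be the indicator random variable of the event i ∈ S. Then X_1, …, X_n are negatively associated: for every pair of disjoint subsets I, J ⊆ {1, …, n} and every pair of coordinatewise nondecreasing functions g : ℝ^I → ℝ and h : ℝ^J → ℝ, one has E[g((X_i)_{i∈I}) · h((X_j)_{j∈J})] ≤ E[g((X_i)_{i∈I})] · E[h((X_j)_{j∈J})]. -/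
open Finset

/-!
Condition on the number `m` of elements of the sample `S` that lie in `I`. Given `m`, the sets
`S ∩ I` and `S ∩ Iᶜ` are independent and uniform among the `m`-subsets of `I` and the
`(k - m)`-subsets of `Iᶜ` (`sum_powersetCard_split`). The mean of a monotone set function over the
`m`-subsets of a fixed set is nondecreasing in `m` (`levelMean_mono`, by double counting the
pairs `A ⊂ insert x A`), so the conditional mean of `g` is nondecreasing in `m` while that of `h`
is nonincreasing. Chebyshev's sum inequality for oppositely ordered sequences
(`weighted_chebyshev`), with the hypergeometric weights `|I|.choose m * |Iᶜ|.choose (k - m)`,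
gives the claim.
-/

section NegativeAssociation

variable {α : Type*}

/-- Mean of the set function `G` over the `m`-element subsets of `s`; it is `0` when there are no
such subsets. -/
noncomputable def levelMean (G : Finset α → ℝ) (s : Finset α) (m : ℕ) : ℝ :=
  (∑ A ∈ powersetCard m s, G A) / (s.card.choose m : ℝ)

lemma sum_powersetCard_eq_mul_levelMean (G : Finset α → ℝ) (s : Finset α) (m : ℕ) :
    ∑ A ∈ powersetCard m s, G A = (s.card.choose m : ℝ) * levelMean G s m := by
  unfold levelMean
  by_cases hc : s.card.choose m = 0
  · -- No `m`-subsets: both sides vanish.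
    have he : powersetCard m s = ∅ := by
      rw [← card_eq_zero, card_powersetCard, hc]
    simp [he]
  · have hc' : (s.card.choose m : ℝ) ≠ 0 := by exact_mod_cast hc
    field_simp

variable [DecidableEq α]

/-- Both sides sum `G (insert x A)` over the pairs `(A, x)` with `A` an `m`-subset of `s` and
`x ∈ s \ A`: each `(m + 1)`-subset `B` arises from the `m + 1` choices of `x ∈ B`. -/
lemma sum_insert_eq (G : Finset α → ℝ) (s : Finset α) (m : ℕ) :
    ∑ A ∈ powersetCard m s, ∑ x ∈ s \ A, G (insert x A) =
      (m + 1 : ℝ) * ∑ B ∈ powersetCard (m + 1) s, G B := by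
  have hB : (m + 1 : ℝ) * ∑ B ∈ powersetCard (m + 1) s, G B =
      ∑ B ∈ powersetCard (m + 1) s, ∑ x ∈ B, G B := by
    rw [mul_sum]
    refine sum_congr rfl fun B hB => ?_
    rw [sum_const, (mem_powersetCard.1 hB).2, nsmul_eq_mul]
    push_cast
    ring
  rw [hB, sum_sigma', sum_sigma']
  refine sum_nbij' (fun p => ⟨insert p.2 p.1, p.2⟩) (fun p => ⟨p.1.erase p.2, p.2⟩) ?_ ?_ ?_ ?_ ?_
  · rintro ⟨A, x⟩ h
    simp only [mem_sigma, mem_powersetCard, mem_sdiff] at h ⊢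
    obtain ⟨⟨hA, hc⟩, hx, hxA⟩ := h
    exact ⟨⟨insert_subset hx hA, by rw [card_insert_of_notMem hxA, hc]⟩, mem_insert_self _ _⟩
  · rintro ⟨B, x⟩ h
    simp only [mem_sigma, mem_powersetCard, mem_sdiff] at h ⊢
    obtain ⟨⟨hB, hc⟩, hx⟩ := h
    exact ⟨⟨(erase_subset _ _).trans hB, by rw [card_erase_of_mem hx, hc]; rfl⟩, hB hx,
      notMem_erase _ _⟩
  · rintro ⟨A, x⟩ h
    simp only [mem_sigma, mem_sdiff] at h
    simp [erase_insert h.2.2]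
  · rintro ⟨B, x⟩ h
    simp only [mem_sigma] at h
    simp [insert_erase h.2]
  · rintro ⟨A, x⟩ _
    rfl

lemma levelMean_le_succ {G : Finset α → ℝ} (hG : Monotone G) (s : Finset α) {m : ℕ}
    (hm : m + 1 ≤ s.card) : levelMean G s m ≤ levelMean G s (m + 1) := by
  have hle : ((s.card : ℝ) - m) * ∑ A ∈ powersetCard m s, G A ≤
      (m + 1 : ℝ) * ∑ B ∈ powersetCard (m + 1) s, G B := by
    rw [← sum_insert_eq, mul_sum]
    refine sum_le_sum fun A hA => ?_
    obtain ⟨hAs, hc⟩ := mem_powersetCard.1 hA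
    have hcard : ((s \ A).card : ℝ) = (s.card : ℝ) - m := by
      rw [cast_card_sdiff hAs, hc]
    rw [← hcard, ← nsmul_eq_mul]
    exact card_nsmul_le_sum _ _ _ fun x _ => hG (subset_insert x A)
  have hch : (s.card.choose (m + 1) : ℝ) * (m + 1) = s.card.choose m * ((s.card : ℝ) - m) := by
    have h := Nat.choose_succ_right_eq s.card m
    rw [← Nat.cast_sub (by omega : m ≤ s.card)]
    exact_mod_cast h
  have h0 : (0 : ℝ) < s.card.choose m := by
    exact_mod_cast Nat.choose_pos (by omega : m ≤ s.card)
  have h1 : (0 : ℝ) < s.card.choose (m + 1) := by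
    exact_mod_cast Nat.choose_pos hm
  rw [sum_powersetCard_eq_mul_levelMean, sum_powersetCard_eq_mul_levelMean] at hle
  have hpos : (0 : ℝ) < s.card.choose (m + 1) * (m + 1) := by positivity
  refine le_of_mul_le_mul_left ?_ hpos
  nlinarith [hle, congrArg (· * levelMean G s m) hch]

lemma levelMean_mono {G : Finset α → ℝ} (hG : Monotone G) (s : Finset α) {m m' : ℕ}
    (h : m ≤ m') (hm' : m' ≤ s.card) : levelMean G s m ≤ levelMean G s m' := by
  induction m', h using Nat.le_induction with
  | base => exact le_rfl
  | succ j _ ih => exact (ih (by omega)).trans (levelMean_le_succ hG s hm')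

/-- A `k`-subset of the ground set is a pair of an `i`-subset of `I` and a `j`-subset of `Iᶜ` with
`i + j = k`. -/
lemma sum_powersetCard_split [Fintype α] (F : Finset α → Finset α → ℝ) (I : Finset α) (k : ℕ) :
    ∑ S ∈ powersetCard k (univ : Finset α), F (S ∩ I) (S ∩ Iᶜ) =
      ∑ p ∈ antidiagonal k, ∑ A ∈ powersetCard p.1 I, ∑ B ∈ powersetCard p.2 Iᶜ, F A B := by
  simp_rw [← sum_product']
  rw [sum_sigma']
  refine sum_nbij' (fun S => ⟨((S ∩ I).card, (S ∩ Iᶜ).card), (S ∩ I, S ∩ Iᶜ)⟩)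
    (fun p => p.2.1 ∪ p.2.2) ?_ ?_ ?_ ?_ ?_
  · intro S hS
    have hc : S.card = k := (mem_powersetCard.1 hS).2
    simp only [mem_sigma, HasAntidiagonal.mem_antidiagonal, mem_product, mem_powersetCard, inter_subset_right,
      and_self, and_true]
    rw [← hc, ← sdiff_eq_inter_compl]
    exact card_inter_add_card_sdiff S I
  · rintro ⟨⟨i, j⟩, A, B⟩ h
    simp only [mem_sigma, HasAntidiagonal.mem_antidiagonal, mem_product, mem_powersetCard] at h ⊢
    obtain ⟨hij, ⟨hA, hi⟩, hB, hj⟩ := h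
    have hd : Disjoint A B := disjoint_compl_right.mono hA hB
    exact ⟨subset_univ _, by rw [card_union_of_disjoint hd, hi, hj, hij]⟩
  · intro S _
    ext x
    simp only [mem_union, mem_inter, mem_compl]
    tauto
  · rintro ⟨⟨i, j⟩, A, B⟩ h
    simp only [mem_sigma, HasAntidiagonal.mem_antidiagonal, mem_product, mem_powersetCard] at h
    obtain ⟨hij, ⟨hA, rfl⟩, hB, rfl⟩ := h
    have h1 : (A ∪ B) ∩ I = A := by
      ext x
      have := @hA x
      have := @hB x
      simp only [mem_union, mem_inter, mem_compl] at *
      tauto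
    have h2 : (A ∪ B) ∩ Iᶜ = B := by
      ext x
      have := @hA x
      have := @hB x
      simp only [mem_union, mem_inter, mem_compl] at *
      tauto
    simp only [h1, h2]
  · intro S _
    rfl

end NegativeAssociation

/-- Chebyshev's sum inequality with weights. Opposite ordering of `P` and `Q` is required only up
to the factor `w p * w q`, so indices of weight zero impose no condition. -/
lemma weighted_chebyshev {ι : Type*} (T : Finset ι) (w P Q : ι → ℝ)
    (hPQ : ∀ p ∈ T, ∀ q ∈ T, w p * w q * ((P p - P q) * (Q p - Q q)) ≤ 0) :
    (∑ p ∈ T, w p) * ∑ p ∈ T, w p * (P p * Q p) ≤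
      (∑ p ∈ T, w p * P p) * ∑ p ∈ T, w p * Q p := by
  have h := sum_nonpos fun p hp => sum_nonpos (hPQ p hp)
  have e : ∑ p ∈ T, ∑ q ∈ T, w p * w q * ((P p - P q) * (Q p - Q q)) =
      (∑ p ∈ T, w p * (P p * Q p)) * (∑ q ∈ T, w q)
        + (∑ p ∈ T, w p) * (∑ q ∈ T, w q * (P q * Q q))
        - (∑ p ∈ T, w p * P p) * (∑ q ∈ T, w q * Q q)
        - (∑ p ∈ T, w p * Q p) * (∑ q ∈ T, w q * P q) := by
    simp_rw [sum_mul_sum, ← sum_add_distrib, ← sum_sub_distrib]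
    exact sum_congr rfl fun p _ => sum_congr rfl fun q _ => by ring
  rw [e] at h
  linarith

/-- The negative correlation inequality for monotone set functions, multiplied through by the
squared number of `k`-subsets. -/
lemma card_mul_sum_le {α : Type*} [DecidableEq α] [Fintype α] (I : Finset α) (k : ℕ)
    {G H : Finset α → ℝ} (hG : Monotone G) (hH : Monotone H) :
    ((powersetCard k (univ : Finset α)).card : ℝ) *
        ∑ S ∈ powersetCard k (univ : Finset α), G (S ∩ I) * H (S ∩ Iᶜ) ≤
      (∑ S ∈ powersetCard k (univ : Finset α), G (S ∩ I)) *
        ∑ S ∈ powersetCard k (univ : Finset α), H (S ∩ Iᶜ) := by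
  set w : ℕ × ℕ → ℝ := fun p => (I.card.choose p.1 : ℝ) * (Iᶜ.card.choose p.2 : ℝ) with hw
  have e0 : ((powersetCard k (univ : Finset α)).card : ℝ) = ∑ p ∈ antidiagonal k, w p := by
    rw [card_eq_sum_ones, Nat.cast_sum]
    simpa [hw] using sum_powersetCard_split (fun _ _ => (1 : ℝ)) I k
  have e1 : ∑ S ∈ powersetCard k (univ : Finset α), G (S ∩ I) =
      ∑ p ∈ antidiagonal k, w p * levelMean G I p.1 := by
    rw [sum_powersetCard_split (fun A _ => G A) I k]
    refine sum_congr rfl fun p _ => ?_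
    simp only [sum_const, card_powersetCard, nsmul_eq_mul]
    rw [← mul_sum, sum_powersetCard_eq_mul_levelMean]
    simp only [hw]
    ring
  have e2 : ∑ S ∈ powersetCard k (univ : Finset α), H (S ∩ Iᶜ) =
      ∑ p ∈ antidiagonal k, w p * levelMean H Iᶜ p.2 := by
    rw [sum_powersetCard_split (fun _ B => H B) I k]
    refine sum_congr rfl fun p _ => ?_
    rw [sum_const, card_powersetCard, nsmul_eq_mul, sum_powersetCard_eq_mul_levelMean]
    simp only [hw]
    ring
  have e3 : ∑ S ∈ powersetCard k (univ : Finset α), G (S ∩ I) * H (S ∩ Iᶜ) =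
      ∑ p ∈ antidiagonal k, w p * (levelMean G I p.1 * levelMean H Iᶜ p.2) := by
    rw [sum_powersetCard_split (fun A B => G A * H B) I k]
    refine sum_congr rfl fun p _ => ?_
    rw [← sum_mul_sum, sum_powersetCard_eq_mul_levelMean, sum_powersetCard_eq_mul_levelMean]
    simp only [hw]
    ring
  rw [e0, e1, e2, e3]
  refine weighted_chebyshev _ _ _ _ fun p hp q hq => ?_
  have hp' := HasAntidiagonal.mem_antidiagonal.1 hp
  have hq' := HasAntidiagonal.mem_antidiagonal.1 hq
  have hwnn : ∀ r, 0 ≤ w r := fun r => by simp only [hw]; positivity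
  -- A nonzero weight forces both levels to be attained, which is the range of monotonicity.
  have hrange : ∀ r, w r ≠ 0 → r.1 ≤ I.card ∧ r.2 ≤ Iᶜ.card := by
    intro r hr
    constructor <;> by_contra! hlt <;> exact hr (by simp [hw, Nat.choose_eq_zero_of_lt hlt])
  by_cases hp0 : w p = 0
  · simp [hp0]
  by_cases hq0 : w q = 0
  · simp [hq0]
  obtain ⟨hp1, hp2⟩ := hrange p hp0
  obtain ⟨hq1, hq2⟩ := hrange q hq0
  refine mul_nonpos_of_nonneg_of_nonpos (mul_nonneg (hwnn p) (hwnn q)) ?_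
  rcases le_total p.1 q.1 with hle | hle
  · have a := levelMean_mono hG I hle hq1
    have b := levelMean_mono hH Iᶜ (by omega : q.2 ≤ p.2) hp2
    exact mul_nonpos_of_nonpos_of_nonneg (by linarith) (by linarith)
  · have a := levelMean_mono hG I hle hp1
    have b := levelMean_mono hH Iᶜ (by omega : p.2 ≤ q.2) hq2
    exact mul_nonpos_of_nonneg_of_nonpos (by linarith) (by linarith)

/-- Proposition 3.4: the membership indicators of a uniformly random `k`-element
subset of `{1,…,n}` are negatively associated: for disjoint index sets `I, J` and
coordinatewise nondecreasing functions `g` (depending only on coordinates in `I`)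
and `h` (depending only on coordinates in `J`),
`E[g·h] ≤ E[g]·E[h]` under the uniform measure on `k`-subsets. -/
theorem sampling_without_replacement_NA (n k : ℕ) (hk1 : 1 ≤ k) (hkn : k ≤ n)
    (I J : Finset (Fin n)) (hIJ : Disjoint I J)
    (g h : (Fin n → ℝ) → ℝ) (hg : Monotone g) (hh : Monotone h)
    (hgI : ∀ x y : Fin n → ℝ, (∀ i ∈ I, x i = y i) → g x = g y)
    (hhJ : ∀ x y : Fin n → ℝ, (∀ j ∈ J, x j = y j) → h x = h y) :
    let Ω := Finset.powersetCard k (Finset.univ : Finset (Fin n))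
    let X : Finset (Fin n) → Fin n → ℝ := fun S i => if i ∈ S then 1 else 0
    (∑ S ∈ Ω, g (X S) * h (X S)) / (Ω.card : ℝ) ≤
      ((∑ S ∈ Ω, g (X S)) / (Ω.card : ℝ)) * ((∑ S ∈ Ω, h (X S)) / (Ω.card : ℝ)) := by
  intro Ω X
  have hX : Monotone X := by
    intro S T hST i
    simp only [X]
    split_ifs with h1 h2
    · exact le_rfl
    · exact absurd (hST h1) h2
    · exact zero_le_one
    · exact le_rfl
  have hgS : ∀ S, g (X S) = g (X (S ∩ I)) := fun S =>
    hgI _ _ fun i hi => by simp [X, hi]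
  have hhS : ∀ S, h (X S) = h (X (S ∩ Iᶜ)) := fun S =>
    hhJ _ _ fun j hj => by
      have hjI : j ∉ I := fun hi => disjoint_left.1 hIJ hi hj
      simp [X, hjI]
  have key := card_mul_sum_le I k (hg.comp hX) (hh.comp hX)
  simp only [Function.comp_apply, ← hgS, ← hhS] at key
  have hpos : (0 : ℝ) < (Ω.card : ℝ) := by
    have : 0 < Ω.card := by
      simp only [Ω, card_powersetCard, card_univ, Fintype.card_fin]
      exact Nat.choose_pos hkn
    exact_mod_cast this
  rw [div_mul_div_comm, div_le_div_iff₀ hpos (mul_pos hpos hpos)]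
  calc (∑ S ∈ Ω, g (X S) * h (X S)) * ((Ω.card : ℝ) * Ω.card)
      = ((Ω.card : ℝ) * ∑ S ∈ Ω, g (X S) * h (X S)) * Ω.card := by ring
    _ ≤ _ := mul_le_mul_of_nonneg_right key hpos.le
end

section
/- Let G be a finite simple graph, let ε > 0, c > 0, and let ℓ be an assignment of a nonnegative integer level ℓ(v) to every vertex v. Define x_e := (1+ε)^{−(max_{v∈e} ℓ(v)) − 1} for every edge e, and suppose that x is a fractional matching of G and that every vertex v with ℓ(v) > 0 satisfies ∑_{e ∋ v} x_e ≥ 1/c. Then for every real d > 1+ε and every edge e with x_e ≤ 1/d, there exists an endpoint v of e such that ∑_{e' ∋ v} x_{e'} ≥ 1/c and x_{e'} ≤ 1/d for every edge e' incident to v. -/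
/-!
The witness is the endpoint `w` of the edge `uv` with the larger level, so that
`x u v = (1 + ε) ^ (-ℓ w - 1)`. Since `x u v ≤ 1 / d < 1 / (1 + ε)`, the level of `w` is
positive, which gives the lower bound on its total weight. Every edge at `w` has maximum level
at least `ℓ w`, hence its value is at most `x u v ≤ 1 / d`.
-/

open Finset

/-- Lemma C.1: the hierarchical-partition fractional matching
`x_e = (1+ε)^{−max_{v∈e} ℓ(v) − 1}` of Bhattacharya–Kulkarni is
`(c,d)`-approximately-maximal for every `d > 1+ε`: every edge `e` with
`x_e ≤ 1/d` has an endpoint `w` with `∑_{e' ∋ w} x_{e'} ≥ 1/c` all of whose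
incident edges `e'` have `x_{e'} ≤ 1/d`. -/
theorem hierarchical_partition_approximately_maximal
    {V : Type*} [Fintype V] [DecidableEq V]
    (G : SimpleGraph V) [DecidableRel G.Adj]
    (ε c : ℝ) (hε : 0 < ε) (hc : 0 < c) (ℓ : V → ℕ) :
    let x : V → V → ℝ := fun u v => (1 + ε) ^ (-(max (ℓ u) (ℓ v) : ℤ) - 1)
    (∀ v : V, ∑ u ∈ G.neighborFinset v, x u v ≤ 1) →
    (∀ v : V, 0 < ℓ v → 1 / c ≤ ∑ u ∈ G.neighborFinset v, x u v) →
    ∀ d : ℝ, 1 + ε < d →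
    ∀ u v : V, G.Adj u v → x u v ≤ 1 / d →
    ∃ w : V, (w = u ∨ w = v) ∧
      (1 / c ≤ ∑ u' ∈ G.neighborFinset w, x u' w) ∧
      ∀ u' ∈ G.neighborFinset w, x u' w ≤ 1 / d := by
  intro x _ hlevel d hd u v _ hx
  obtain ⟨w, hw, hmax⟩ : ∃ w, (w = u ∨ w = v) ∧ max (ℓ u : ℤ) (ℓ v) = ℓ w := by
    rcases le_total (ℓ u) (ℓ v) with h | h
    · exact ⟨v, Or.inr rfl, by simpa using h⟩
    · exact ⟨u, Or.inl rfl, by simpa using h⟩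
  have hxw : (1 + ε) ^ (-(ℓ w : ℤ) - 1) ≤ 1 / d := by
    simpa only [x, hmax] using hx
  refine ⟨w, hw, hlevel w ?_, fun u' _ => ?_⟩
  · -- At level zero the edge value would be `1 / (1 + ε)`, which exceeds `1 / d`.
    by_contra h0
    have h0' : ℓ w = 0 := by omega
    have hlt : 1 / d < 1 / (1 + ε) := one_div_lt_one_div_of_lt (by linarith) hd
    have heq : (1 + ε) ^ (-(ℓ w : ℤ) - 1) = 1 / (1 + ε) := by
      simp [h0', zpow_neg_one]
    linarith
  · refine le_trans (zpow_le_zpow_right₀ (by linarith) ?_) hxw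
    have := le_max_right (ℓ u' : ℤ) (ℓ w)
    linarith
end

section
/- Let G be a finite simple graph, let ε ∈ (0,1), let c ≥ 1/(1−ε) be real and d ≥ 1 an integer. Let 𝓗 be a probability distribution over subgraphs H of G such that: (1) with probability one, every vertex has degree at most d in H; (2) for every edge e of G with Pr[e ∉ H] > ε, the conditional expectation E[max_{v∈e} deg_H(v) | e ∉ H] is at least d/c. Let M* be a maximum matching of G and, for each realization H, define f^H on the edges of H by f^H_e = 1/d if e ∉ M* and f^H_{(u,v)} = max{1 − (deg_H(u) + deg_H(v) − 2)/d, 0} if (u,v) ∈ M* ∩ H. Then E_{H∼𝓗}[∑_{e ∈ E(H)} f^H_e] ≥ μ(G)/(2c). -/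
/-!
Fix a realization `H`. Every edge of `H` outside the matching `M` has weight `1/d`; it hands
`1/(2d)` to each of its endpoints, and an endpoint covered by `M` passes what it receives on to its
unique matching edge. The share `edgeShare H M d e` of a matching edge `e = uv` is its own weight
(if `e ∈ H`) plus what it receives, and the shares sum to at most the total weight of `f^H`
(`sum_edgeShare_le`).

If `e ∈ H`, its share is at least `max (1 - x) 0 + x/2 ≥ 1/2` with
`x = (deg u + deg v - 2)/d ≥ 0`; if `e ∉ H`, it is at least `(deg u + deg v)/(2d)`, hence at least
`max (deg u) (deg v) / (2d)` (`edgeShare_ge`). Averaging over `H`, with `q = Pr[e ∉ H]`: if `q ≤ ε`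
the expected share is at least `(1 - ε)/2 ≥ 1/(2c)`, and otherwise the kernel condition gives at
least `(1 - q)/2 + q/(2c) ≥ 1/(2c)`, because `c ≥ 1`. Summing over `M` gives the bound.
-/

open Finset

/-- The number of edges of `H` outside `M` that are incident to `w`. -/
def offDegree {V : Type*} [Fintype V] [DecidableEq V]
    (H : SimpleGraph V) [DecidableRel H.Adj] (M : Finset (Sym2 V)) (w : V) : ℕ :=
  ((H.edgeFinset \ M).filter (fun f => w ∈ f)).card

/-- The share of the total weight of `f^H` attributed to an edge `e` of `M`: its own weight if it
lies in `H`, plus `1/(2d)` for every incidence of an edge of `H` outside `M` with an endpoint of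
`e`. -/
noncomputable def edgeShare {V : Type*} [Fintype V] [DecidableEq V]
    (H : SimpleGraph V) [DecidableRel H.Adj] (M : Finset (Sym2 V)) (d : ℕ) (e : Sym2 V) : ℝ :=
  (if e ∈ H.edgeFinset then fKer H M d e else 0) +
    (∑ w ∈ e.toFinset, (offDegree H M w : ℝ)) / (2 * d)

/-- Double counting of the incidences between edges of `H` outside `M` and vertices covered by `M`:
each such edge has two endpoints, and each vertex lies in at most one edge of `M`. -/
lemma sum_offDegree_le {V : Type*} [Fintype V] [DecidableEq V]
    (G H : SimpleGraph V) [DecidableRel H.Adj] (M : Finset (Sym2 V)) (hM : IsMatchingSet G M) :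
    ∑ e ∈ M, ∑ w ∈ e.toFinset, offDegree H M w ≤ 2 * (H.edgeFinset \ M).card := by
  have hdisj : (M : Set (Sym2 V)).PairwiseDisjoint Sym2.toFinset := by
    intro e he f hf hef
    refine Finset.disjoint_left.2 fun w hwe hwf => ?_
    exact hM.2 e he f hf hef w (Sym2.mem_toFinset.1 hwe) (Sym2.mem_toFinset.1 hwf)
  rw [← Finset.sum_biUnion hdisj]
  calc ∑ w ∈ M.biUnion Sym2.toFinset, offDegree H M w
      ≤ ∑ w, offDegree H M w :=
        Finset.sum_le_sum_of_subset (Finset.subset_univ _)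
    _ = ∑ w, ∑ f ∈ H.edgeFinset \ M, if w ∈ f then 1 else 0 := by
        simp only [offDegree, Finset.card_filter]
    _ = ∑ f ∈ H.edgeFinset \ M, f.toFinset.card := by
        rw [Finset.sum_comm]
        refine Finset.sum_congr rfl fun f _ => ?_
        rw [← Finset.card_filter]
        congr 1
        ext w
        simp
    _ ≤ ∑ f ∈ H.edgeFinset \ M, 2 := by
        refine Finset.sum_le_sum fun f _ => ?_
        rw [Sym2.card_toFinset]
        split_ifs <;> norm_num
    _ = 2 * (H.edgeFinset \ M).card := by simp [mul_comm]

lemma sum_edgeShare_le {V : Type*} [Fintype V] [DecidableEq V]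
    (G H : SimpleGraph V) [DecidableRel H.Adj] (M : Finset (Sym2 V)) (hM : IsMatchingSet G M)
    (d : ℕ) (hd : 1 ≤ d) :
    ∑ e ∈ M, edgeShare H M d e ≤ ∑ e ∈ H.edgeFinset, fKer H M d e := by
  have hd0 : (0 : ℝ) < d := by exact_mod_cast hd
  have hout : ∀ e ∈ H.edgeFinset \ M, fKer H M d e = 1 / d := by
    intro e he
    induction e with
    | _ u v => simp [fKer, (Finset.mem_sdiff.1 he).2]
  rw [← Finset.sum_inter_add_sum_sdiff H.edgeFinset M, Finset.sum_congr rfl hout]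
  simp only [edgeShare, Finset.sum_add_distrib]
  refine add_le_add (le_of_eq ?_) ?_
  · rw [← Finset.sum_filter]
    refine Finset.sum_congr ?_ fun _ _ => rfl
    ext e
    simp [and_comm]
  · rw [← Finset.sum_div, Finset.sum_const, nsmul_eq_mul, mul_one_div,
      div_le_div_iff₀ (by positivity) hd0]
    have h : ((∑ e ∈ M, ∑ w ∈ e.toFinset, offDegree H M w : ℕ) : ℝ)
        ≤ (2 * (H.edgeFinset \ M).card : ℕ) := by
      exact_mod_cast sum_offDegree_le G H M hM
    push_cast at h
    nlinarith

/-- At an endpoint of `e ∈ M`, all incident edges of `H` other than `e` itself avoid `M`. -/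
lemma degree_le_offDegree {V : Type*} [Fintype V] [DecidableEq V]
    (G H : SimpleGraph V) [DecidableRel H.Adj] (M : Finset (Sym2 V)) (hM : IsMatchingSet G M)
    (e : Sym2 V) (he : e ∈ M) (w : V) (hw : w ∈ e) :
    H.degree w ≤ offDegree H M w + if e ∈ H.edgeFinset then 1 else 0 := by
  rw [← SimpleGraph.card_incidenceFinset_eq_degree]
  have hsub : (H.incidenceFinset w).erase e ⊆ (H.edgeFinset \ M).filter (fun f => w ∈ f) := by
    intro f hf
    obtain ⟨hfe, hf⟩ := Finset.mem_erase.1 hf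
    rw [SimpleGraph.mem_incidenceFinset] at hf
    simp only [Finset.mem_filter, Finset.mem_sdiff, SimpleGraph.mem_edgeFinset]
    exact ⟨⟨hf.1, fun hfM => hM.2 e he f hfM (Ne.symm hfe) w hw hf.2⟩, hf.2⟩
  have hcard := Finset.card_le_card hsub
  rw [Finset.card_erase_eq_ite] at hcard
  have hmem : e ∈ H.incidenceFinset w → e ∈ H.edgeFinset := by
    intro h
    rw [SimpleGraph.mem_incidenceFinset] at h
    exact SimpleGraph.mem_edgeFinset.2 h.1
  unfold offDegree
  split_ifs at hcard ⊢ <;> first | omega | tauto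

lemma edgeShare_ge {V : Type*} [Fintype V] [DecidableEq V]
    (G H : SimpleGraph V) [DecidableRel H.Adj] (M : Finset (Sym2 V)) (hM : IsMatchingSet G M)
    (d : ℕ) (hd : 1 ≤ d) (u v : V) (he : s(u, v) ∈ M) :
    (if H.Adj u v then 1 / 2 else ((max (H.degree u) (H.degree v) : ℕ) : ℝ) / (2 * d))
      ≤ edgeShare H M d s(u, v) := by
  have hd0 : (0 : ℝ) < d := by exact_mod_cast hd
  have huv : u ≠ v := (hM.1 _ he : G.Adj u v).ne
  have hu := degree_le_offDegree G H M hM _ he u (by simp)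
  have hv := degree_le_offDegree G H M hM _ he v (by simp)
  have hset : (s(u, v)).toFinset = {u, v} := by ext; simp
  simp only [edgeShare, hset, Finset.sum_pair huv, SimpleGraph.mem_edgeFinset,
    SimpleGraph.mem_edgeSet] at hu hv ⊢
  split_ifs at hu hv ⊢ with hadj
  · have hu' : (H.degree u : ℝ) ≤ offDegree H M u + 1 := by exact_mod_cast hu
    have hv' : (H.degree v : ℝ) ≤ offDegree H M v + 1 := by exact_mod_cast hv
    have hf : fKer H M d s(u, v)
        = max (1 - ((H.degree u : ℝ) + (H.degree v : ℝ) - 2) / (d : ℝ)) 0 := by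
      simp [fKer, he]
    have hx : ((H.degree u : ℝ) + (H.degree v : ℝ) - 2) / d / 2
        ≤ ((offDegree H M u : ℝ) + offDegree H M v) / (2 * d) := by
      rw [div_div, mul_comm (d : ℝ) 2]
      gcongr
      linarith
    have h1 := le_max_left (1 - ((H.degree u : ℝ) + (H.degree v : ℝ) - 2) / (d : ℝ)) 0
    have h2 := le_max_right (1 - ((H.degree u : ℝ) + (H.degree v : ℝ) - 2) / (d : ℝ)) 0
    rw [hf]
    linarith
  · rw [zero_add]
    gcongr
    have h : max (H.degree u) (H.degree v) ≤ offDegree H M u + offDegree H M v := by omega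
    exact_mod_cast h

/-- Inequality (2) in the proof of Lemma 4.3, randomized case: a `(c,d,ε)`-kernel
distribution `𝓗` (modelled by a finite probability space `(Ω, p)` and a
subgraph-valued random variable `H`) supports, via the fractional matchings
`f^H = fKer (H ω) M* d` built from a maximum matching `M*` of `G`, an expected
total fractional value of at least `μ(G)/(2c)`. Condition (2) of kernels is
stated in the equivalent product form avoiding division by `Pr[e ∉ H]`. -/
theorem randomized_kernel_expected_fractional_value
    {V : Type*} [Fintype V] [DecidableEq V]
    (G : SimpleGraph V) (ε : ℝ) (hε0 : 0 < ε) (hε1 : ε < 1)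
    (c : ℝ) (hc : 1 / (1 - ε) ≤ c) (d : ℕ) (hd : 1 ≤ d)
    {Ω : Type*} [Fintype Ω] (p : Ω → ℝ)
    (hp0 : ∀ ω, 0 ≤ p ω) (hp1 : ∑ ω, p ω = 1)
    (H : Ω → SimpleGraph V) [∀ ω, DecidableRel (H ω).Adj]
    (hsub : ∀ ω, H ω ≤ G)
    (hdeg : ∀ ω v, (H ω).degree v ≤ d)
    (hker : ∀ u v : V, G.Adj u v →
      ε < ∑ ω ∈ univ.filter (fun ω => ¬(H ω).Adj u v), p ω →
      ((d : ℝ) / c) * ∑ ω ∈ univ.filter (fun ω => ¬(H ω).Adj u v), p ω ≤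
        ∑ ω ∈ univ.filter (fun ω => ¬(H ω).Adj u v),
          p ω * ((max ((H ω).degree u) ((H ω).degree v) : ℕ) : ℝ))
    (M : Finset (Sym2 V)) (hM : IsMatchingSet G M) (hMmax : M.card = matchNum G) :
    (matchNum G : ℝ) / (2 * c) ≤
      ∑ ω, p ω * ∑ e ∈ (H ω).edgeFinset, fKer (H ω) M d e := by
  have hd0 : (0 : ℝ) < d := by exact_mod_cast hd
  have hε : 0 < 1 - ε := by linarith
  have hc1 : 1 ≤ c := le_trans (by rw [le_div_iff₀ hε]; linarith) hc
  have hc0 : 0 < c := by linarith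
  have hcε : 1 / c ≤ 1 - ε := by
    rw [div_le_iff₀ hε] at hc
    rw [div_le_iff₀ hc0]
    linarith
  have hedge : ∀ e ∈ M, 1 / (2 * c) ≤ ∑ ω, p ω * edgeShare (H ω) M d e := by
    intro e he
    induction e with
    | _ u v =>
    have hG : G.Adj u v := hM.1 _ he
    have hlow : ∑ ω, p ω * (if (H ω).Adj u v then 1 / 2 else
        ((max ((H ω).degree u) ((H ω).degree v) : ℕ) : ℝ) / (2 * d))
        ≤ ∑ ω, p ω * edgeShare (H ω) M d s(u, v) :=
      Finset.sum_le_sum fun ω _ =>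
        mul_le_mul_of_nonneg_left (edgeShare_ge G (H ω) M hM d hd u v he) (hp0 ω)
    refine le_trans ?_ hlow
    rw [← Finset.sum_filter_add_sum_filter_not univ (fun ω => (H ω).Adj u v)]
    have hA : ∑ ω ∈ univ.filter (fun ω => (H ω).Adj u v), p ω * (if (H ω).Adj u v then 1 / 2 else
        ((max ((H ω).degree u) ((H ω).degree v) : ℕ) : ℝ) / (2 * d))
        = (∑ ω ∈ univ.filter (fun ω => (H ω).Adj u v), p ω) / 2 := by
      rw [Finset.sum_div]
      refine Finset.sum_congr rfl fun ω hω => ?_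
      rw [if_pos (Finset.mem_filter.1 hω).2]
      ring
    have hB : ∑ ω ∈ univ.filter (fun ω => ¬(H ω).Adj u v),
        p ω * (if (H ω).Adj u v then 1 / 2 else
        ((max ((H ω).degree u) ((H ω).degree v) : ℕ) : ℝ) / (2 * d))
        = (∑ ω ∈ univ.filter (fun ω => ¬(H ω).Adj u v),
          p ω * ((max ((H ω).degree u) ((H ω).degree v) : ℕ) : ℝ)) / (2 * d) := by
      rw [Finset.sum_div]
      refine Finset.sum_congr rfl fun ω hω => ?_
      rw [if_neg (Finset.mem_filter.1 hω).2]
      ring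
    rw [hA, hB]
    have hsum := Finset.sum_filter_add_sum_filter_not univ (fun ω => (H ω).Adj u v) p
    rw [hp1] at hsum
    have hk := hker u v hG
    have hD0 : 0 ≤ ∑ ω ∈ univ.filter (fun ω => ¬(H ω).Adj u v),
        p ω * ((max ((H ω).degree u) ((H ω).degree v) : ℕ) : ℝ) :=
      Finset.sum_nonneg fun ω _ => mul_nonneg (hp0 ω) (Nat.cast_nonneg _)
    have hr0 : 0 ≤ ∑ ω ∈ univ.filter (fun ω => (H ω).Adj u v), p ω :=
      Finset.sum_nonneg fun ω _ => hp0 ω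
    generalize ∑ ω ∈ univ.filter (fun ω => ¬(H ω).Adj u v),
        p ω * ((max ((H ω).degree u) ((H ω).degree v) : ℕ) : ℝ) = D at hk hD0 ⊢
    generalize ∑ ω ∈ univ.filter (fun ω => ¬(H ω).Adj u v), p ω = q at hk hsum
    generalize ∑ ω ∈ univ.filter (fun ω => (H ω).Adj u v), p ω = r at hsum hr0 ⊢
    have hhalf : 1 / (2 * c) = (1 / c) / 2 := by rw [div_div, mul_comm]
    rw [hhalf]
    rcases le_or_gt q ε with hq | hq
    · have : 0 ≤ D / (2 * d) := by positivity
      linarith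
    · have hD : q * (1 / c) / 2 ≤ D / (2 * d) := by
        calc q * (1 / c) / 2 = d / c * q / (2 * d) := by field_simp
          _ ≤ D / (2 * d) := by gcongr; exact hk hq
      have hcle : 1 / c ≤ 1 := by rw [div_le_iff₀ hc0]; linarith
      -- `1/c = r/c + q/c ≤ r + q/c`
      have hrc : r * (1 / c) ≤ r := mul_le_of_le_one_right hr0 hcle
      have hone : 1 / c = r * (1 / c) + q * (1 / c) := by rw [← add_mul, hsum, one_mul]
      linarith
  calc (matchNum G : ℝ) / (2 * c) = ∑ e ∈ M, 1 / (2 * c) := by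
        rw [Finset.sum_const, nsmul_eq_mul, hMmax, mul_one_div]
    _ ≤ ∑ e ∈ M, ∑ ω, p ω * edgeShare (H ω) M d e := Finset.sum_le_sum hedge
    _ = ∑ ω, p ω * ∑ e ∈ M, edgeShare (H ω) M d e := by
        rw [Finset.sum_comm]
        simp only [Finset.mul_sum]
    _ ≤ ∑ ω, p ω * ∑ e ∈ (H ω).edgeFinset, fKer (H ω) M d e :=
        Finset.sum_le_sum fun ω _ =>
          mul_le_mul_of_nonneg_left (sum_edgeShare_le G (H ω) M hM d hd) (hp0 ω)
end
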